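/- arXiv:1808.02133 — 3 statements merged into one kernel-verified Lean document; each statement's English description precedes it below -/
import Mathlib

section
/- Fractional Korn's inequality on the whole space: Let d ≥ 1 be an integer, s ∈ (0,1) and 1 < p < ∞. For every vector field f ∈ L^p(ℝ^d; ℝ^d) one has [f]_{𝒳^s_p(ℝ^d)} ≤ [f]_{W^{s,p}(ℝ^d)}, and there exists a constant C = C(d,p,s) > 0 such that [f]_{W^{s,p}(ℝ^d)} ≤ C · [f]_{𝒳^s_p(ℝ^d)}. In particular, a vector field f ∈ L^p(ℝ^d; ℝ^d) has finite Gagliardo seminorm [f]_{W^{s,p}(ℝ^d)} if and only if it has finite projected seminorm [f]_{𝒳^s_p(ℝ^d)}. -/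
open MeasureTheory Filter Set
open scoped ENNReal NNReal Topology

noncomputable section

abbrev Ed (d : ℕ) : Type := EuclideanSpace ℝ (Fin d)

/-- The `p`-th power of the projected Gagliardo seminorm `[f]_{𝒳^s_p(Ω)}^p`. -/
def projGagP (d : ℕ) (s p : ℝ) (Ω : Set (Ed d)) (f : Ed d → Ed d) : ℝ≥0∞ :=
  ∫⁻ x in Ω, ∫⁻ y in Ω,
    ENNReal.ofReal ((|(inner ℝ (f y - f x) (y - x) : ℝ)| / ‖y - x‖) ^ p /
      ‖y - x‖ ^ ((d : ℝ) + s * p))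

/-- The projected Gagliardo seminorm `[f]_{𝒳^s_p(Ω)}`. -/
def projSem (d : ℕ) (s p : ℝ) (Ω : Set (Ed d)) (f : Ed d → Ed d) : ℝ≥0∞ :=
  projGagP d s p Ω f ^ (1 / p)

/-- The `p`-th power of the Gagliardo seminorm `[f]_{W^{s,p}(Ω)}^p`. -/
def gagP (d : ℕ) (s p : ℝ) (Ω : Set (Ed d)) (f : Ed d → Ed d) : ℝ≥0∞ :=
  ∫⁻ x in Ω, ∫⁻ y in Ω,
    ENNReal.ofReal (‖f y - f x‖ ^ p / ‖y - x‖ ^ ((d : ℝ) + s * p))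

/-- The Gagliardo seminorm `[f]_{W^{s,p}(Ω)}`. -/
def gagSem (d : ℕ) (s p : ℝ) (Ω : Set (Ed d)) (f : Ed d → Ed d) : ℝ≥0∞ :=
  gagP d s p Ω f ^ (1 / p)

section Korn

variable {d : ℕ}

/-- normalized projected difference -/
def pE (g : Ed d → Ed d) (a b : Ed d) : ℝ := |(inner ℝ (g b - g a) (b - a) : ℝ)| / ‖b - a‖

lemma pE_nonneg (g : Ed d → Ed d) (a b : Ed d) : 0 ≤ pE g a b := by unfold pE; positivity

lemma abs_inner_eq_pE (g : Ed d → Ed d) (a b : Ed d) :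
    |(inner ℝ (g b - g a) (b - a) : ℝ)| = pE g a b * ‖b - a‖ := by
  unfold pE
  by_cases h : b - a = 0
  · simp [h]
  · have : ‖b - a‖ ≠ 0 := norm_ne_zero_iff.2 h
    field_simp

lemma korn_identity (f0 fp fm fk h k : Ed d) :
    (inner ℝ (fp - (2:ℝ) • f0 + fm) k : ℝ) =
      2 * inner ℝ (fk - f0) k - inner ℝ (fk - fp) (k - h) - inner ℝ (fk - fm) (k + h)
        + inner ℝ (fp - f0) h + inner ℝ (f0 - fm) h := by
  simp only [inner_sub_left, inner_sub_right, inner_add_left, inner_add_right, inner_smul_left]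
  simp
  ring

/-- the base points -/
def Sm (_T : Ed d →L[ℝ] Ed d) : Fin 5 → (Ed d →L[ℝ] Ed d) :=
  ![0, 1, -1, 0, -1]
/-- the displacements -/
def Bm (T : Ed d →L[ℝ] Ed d) : Fin 5 → (Ed d →L[ℝ] Ed d) :=
  ![T, T - 1, T + 1, 1, 1]

lemma korn_one (T : Ed d →L[ℝ] Ed d) : ∃ K : ℝ, 0 ≤ K ∧ ∀ (g : Ed d → Ed d) (x h : Ed d),
    |(inner ℝ (g (x + h) - (2:ℝ) • g x + g (x - h)) (T h) : ℝ)| ≤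
      ‖h‖ * (K * ∑ i, pE g (x + Sm T i h) (x + Sm T i h + Bm T i h)) := by
  have hb : ∀ i, ‖Bm T i‖ ≤ ∑ i, ‖Bm T i‖ := fun i =>
    Finset.single_le_sum (f := fun i => ‖Bm T i‖) (fun _ _ => norm_nonneg _) (Finset.mem_univ i)
  refine ⟨2 * ∑ i, ‖Bm T i‖, by positivity, fun g x h => ?_⟩
  set M := ∑ i, ‖Bm T i‖
  have key : ∀ i, |(inner ℝ (g (x + Sm T i h + Bm T i h) - g (x + Sm T i h)) (Bm T i h) : ℝ)| ≤
      M * ‖h‖ * pE g (x + Sm T i h) (x + Sm T i h + Bm T i h) := by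
    intro i
    have := abs_inner_eq_pE g (x + Sm T i h) (x + Sm T i h + Bm T i h)
    rw [add_sub_cancel_left] at this
    rw [this, mul_comm]
    apply mul_le_mul_of_nonneg_right _ (pE_nonneg _ _ _)
    exact ((Bm T i).le_opNorm h).trans (mul_le_mul_of_nonneg_right (hb i) (norm_nonneg _))
  rw [korn_identity (g x) (g (x+h)) (g (x-h)) (g (x + T h)) h (T h)]
  have k0 := key 0
  have k1 := key 1
  have k2 := key 2
  have k3 := key 3
  have k4 := key 4
  have p0 := pE_nonneg g (x + Sm T 0 h) (x + Sm T 0 h + Bm T 0 h)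
  have p1 := pE_nonneg g (x + Sm T 1 h) (x + Sm T 1 h + Bm T 1 h)
  have p2 := pE_nonneg g (x + Sm T 2 h) (x + Sm T 2 h + Bm T 2 h)
  have p3 := pE_nonneg g (x + Sm T 3 h) (x + Sm T 3 h + Bm T 3 h)
  have p4 := pE_nonneg g (x + Sm T 4 h) (x + Sm T 4 h + Bm T 4 h)
  rw [Fin.sum_univ_five]
  generalize pE g (x + Sm T 0 h) (x + Sm T 0 h + Bm T 0 h) = e0 at *
  generalize pE g (x + Sm T 1 h) (x + Sm T 1 h + Bm T 1 h) = e1 at *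
  generalize pE g (x + Sm T 2 h) (x + Sm T 2 h + Bm T 2 h) = e2 at *
  generalize pE g (x + Sm T 3 h) (x + Sm T 3 h + Bm T 3 h) = e3 at *
  generalize pE g (x + Sm T 4 h) (x + Sm T 4 h + Bm T 4 h) = e4 at *
  have hM : 0 ≤ M * ‖h‖ := by positivity
  have q1 := mul_nonneg hM p1
  have q2 := mul_nonneg hM p2
  have q3 := mul_nonneg hM p3
  have q4 := mul_nonneg hM p4
  simp only [Sm, Bm] at k0 k1 k2 k3 k4
  simp at k0 k1 k2 k3 k4
  have e2' : x + -h + (T h + h) = x + T h := by abel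
  rw [e2'] at k2
  rw [← sub_eq_add_neg] at k2 k4
  rw [abs_le] at *
  constructor <;> linarith

lemma inj_of_close (T : Ed d →L[ℝ] Ed d) (hT : ∀ h, ‖T h‖ ≤ ‖h‖) (i : Fin 5) :
    Function.Injective (Bm ((3:ℝ) • (1 : Ed d →L[ℝ] Ed d) + T) i) := by
  rw [injective_iff_map_eq_zero]
  intro h hh
  have h1 := hT h
  have gen : ∀ c : ℝ, 1 < c → c • h + T h = 0 → h = 0 := by
    intro c hc he
    by_contra hne
    have hn : 0 < ‖h‖ := norm_pos_iff.2 hne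
    have : c • h = - T h := eq_neg_of_add_eq_zero_left he
    have h2 : ‖c • h‖ = ‖T h‖ := by rw [this, norm_neg]
    rw [norm_smul, Real.norm_of_nonneg (by linarith)] at h2
    nlinarith
  fin_cases i
  · refine gen 3 (by norm_num) (by simpa [Bm] using hh)
  · refine gen 2 (by norm_num) ?_
    rw [← hh]; simp [Bm]; module
  · refine gen 4 (by norm_num) ?_
    rw [← hh]; simp [Bm]; module
  · simpa [Bm] using hh
  · simpa [Bm] using hh

/-- elementary matrix -/
def El (i j : Fin d) : Ed d →L[ℝ] Ed d :=
  (EuclideanSpace.proj j : Ed d →L[ℝ] ℝ).smulRight (EuclideanSpace.single i (1:ℝ))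

lemma El_apply (i j : Fin d) (h : Ed d) : El i j h = h j • EuclideanSpace.single i (1:ℝ) := by
  simp [El]

lemma El_le (i j : Fin d) (h : Ed d) : ‖El i j h‖ ≤ ‖h‖ := by
  rw [El_apply, norm_smul]
  simpa using PiLp.norm_apply_le h j

/-- family of perturbations -/
def Tm : Option (Fin d × Fin d) → (Ed d →L[ℝ] Ed d)
  | none => 0
  | some q => El q.1 q.2

lemma Tm_le (o : Option (Fin d × Fin d)) (h : Ed d) : ‖Tm o h‖ ≤ ‖h‖ := by
  cases o
  · simp [Tm]
  · exact El_le _ _ _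

/-- the family `3 I + T` -/
def Am (o : Option (Fin d × Fin d)) : Ed d →L[ℝ] Ed d := (3:ℝ) • (1 : Ed d →L[ℝ] Ed d) + Tm o

lemma norm_le_sum_abs (v : Ed d) : ‖v‖ ≤ ∑ i, |v i| := by
  have h : v = ∑ i, v i • EuclideanSpace.single i (1:ℝ) := by
    ext j
    simp [Finset.sum_apply, Pi.single_apply]
  calc ‖v‖ = ‖∑ i, v i • EuclideanSpace.single i (1:ℝ)‖ := by rw [← h]
    _ ≤ ∑ i, ‖v i • EuclideanSpace.single i (1:ℝ)‖ := norm_sum_le _ _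
    _ = _ := by simp [norm_smul]

lemma norm_mul_le_sum_inner (h v : Ed d) : ‖v‖ * ‖h‖ ≤
    (1 + (d:ℝ) * d) * ∑ o, |(inner ℝ v (Am o h) : ℝ)| := by
  have h0 : ∀ q : Fin d × Fin d, |v q.1| * |h q.2| ≤
      |(inner ℝ v (Am (some q) h) : ℝ)| + |(inner ℝ v (Am none h) : ℝ)| := by
    intro q
    have : v q.1 * h q.2 = inner ℝ v (Am (some q) h) - inner ℝ v (Am none h) := by
      simp only [Am, Tm]
      rw [← inner_sub_right]
      simp [El_apply, inner_smul_right, EuclideanSpace.inner_single_right]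
      ring
    rw [← abs_mul, this]
    exact abs_sub _ _
  calc ‖v‖ * ‖h‖ ≤ (∑ i, |v i|) * ∑ j, |h j| := by
        gcongr
        · exact norm_le_sum_abs v
        · exact norm_le_sum_abs h
    _ = ∑ q : Fin d × Fin d, |v q.1| * |h q.2| := by
        rw [Finset.sum_mul_sum, Fintype.sum_prod_type]
    _ ≤ ∑ q : Fin d × Fin d, (|(inner ℝ v (Am (some q) h) : ℝ)| + |(inner ℝ v (Am none h) : ℝ)|) :=
        Finset.sum_le_sum fun q _ => h0 q
    _ = (∑ q : Fin d × Fin d, |(inner ℝ v (Am (some q) h) : ℝ)|)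
          + ((d:ℝ) * d) * |(inner ℝ v (Am none h) : ℝ)| := by
        rw [Finset.sum_add_distrib]; simp
    _ ≤ _ := by
        rw [Fintype.sum_option]
        have a1 : 0 ≤ ∑ q : Fin d × Fin d, |(inner ℝ v (Am (some q) h) : ℝ)| :=
          Finset.sum_nonneg fun _ _ => abs_nonneg _
        have a2 := abs_nonneg (inner ℝ v (Am none h) : ℝ)
        have a3 : (0:ℝ) ≤ (d:ℝ) * d := by positivity
        nlinarith [mul_nonneg a3 a1, mul_nonneg a3 a2]

/-- index type -/
abbrev Idx (d : ℕ) := Option (Fin d × Fin d) × Fin 5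

lemma korn_pointwise : ∃ K : ℝ, 0 ≤ K ∧ ∀ (g : Ed d → Ed d) (x h : Ed d),
    ‖g (x + h) - (2:ℝ) • g x + g (x - h)‖ ≤
      K * ∑ i : Idx d, pE g (x + Sm (Am i.1) i.2 h) (x + Sm (Am i.1) i.2 h + Bm (Am i.1) i.2 h) := by
  choose K hK0 hK using fun o : Option (Fin d × Fin d) => korn_one (Am o)
  have hKs : ∀ o, K o ≤ ∑ o, K o := fun o =>
    Finset.single_le_sum (f := K) (fun _ _ => hK0 _) (Finset.mem_univ o)
  have hKn : 0 ≤ ∑ o, K o := Finset.sum_nonneg fun _ _ => hK0 _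
  refine ⟨(1 + (d:ℝ) * d) * ∑ o, K o, by positivity, fun g x h => ?_⟩
  have hsn : 0 ≤ ∑ i : Idx d, pE g (x + Sm (Am i.1) i.2 h)
      (x + Sm (Am i.1) i.2 h + Bm (Am i.1) i.2 h) := Finset.sum_nonneg fun _ _ => pE_nonneg _ _ _
  by_cases hh : h = 0
  · have : g (x + h) - (2:ℝ) • g x + g (x - h) = 0 := by
      subst hh; simp; module
    rw [this, norm_zero]
    positivity
  have hn : 0 < ‖h‖ := norm_pos_iff.2 hh
  refine le_of_mul_le_mul_right ?_ hn
  refine (norm_mul_le_sum_inner h _).trans ?_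
  rw [mul_assoc, mul_assoc]
  refine mul_le_mul_of_nonneg_left ?_ (by positivity)
  rw [Fintype.sum_prod_type, ← mul_assoc, Finset.mul_sum, Finset.sum_mul]
  · refine Finset.sum_le_sum fun o _ => (hK o g x h).trans ?_
    rw [mul_comm ‖h‖]
    gcongr
    · exact Finset.sum_nonneg fun _ _ => pE_nonneg _ _ _
    · exact hKs o

/-- the kernel weight -/
def wt (d : ℕ) (q : ℝ) (h : Ed d) : ℝ≥0∞ := ENNReal.ofReal (1 / ‖h‖ ^ q)

lemma measurable_wt (q : ℝ) : Measurable (wt d q) := by unfold wt; fun_prop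

/-- integral over differences -/
def dInt (q : ℝ) (Φ : Ed d → Ed d → ℝ≥0∞) : ℝ≥0∞ := ∫⁻ h, (∫⁻ x, Φ x (x + h)) * wt d q h

lemma lintegral_eq_dInt (q : ℝ) (Φ : Ed d → Ed d → ℝ≥0∞)
    (hΦ : Measurable (Function.uncurry Φ)) :
    ∫⁻ x, ∫⁻ y, Φ x y * wt d q (y - x) = dInt q Φ := by
  have hw := measurable_wt (d := d) q
  have h1 : ∀ x, ∫⁻ y, Φ x y * wt d q (y - x) = ∫⁻ h, Φ x (x + h) * wt d q h := by
    intro x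
    rw [← lintegral_add_left_eq_self _ x]
    simp
  simp_rw [h1]
  rw [lintegral_lintegral_swap]
  · unfold dInt
    congr 1
    ext h
    rw [lintegral_mul_const]
    exact hΦ.comp (measurable_id.prodMk (measurable_id.add_const h))
  · apply Measurable.aemeasurable
    exact (hΦ.comp (measurable_fst.prodMk (measurable_fst.add measurable_snd))).mul
      (hw.comp measurable_snd)

lemma lintegral_comp_linear (B : Ed d →L[ℝ] Ed d) (hB : Function.Injective B) :
    ∃ c : ℝ≥0∞, c ≠ ∞ ∧ ∀ G : Ed d → ℝ≥0∞, Measurable G →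
      ∫⁻ h, G (B h) = c * ∫⁻ h, G h := by
  have hdet : LinearMap.det (B : Ed d →ₗ[ℝ] Ed d) ≠ 0 := by
    have := (LinearEquiv.isUnit_det' (LinearEquiv.ofInjectiveEndo (B : Ed d →ₗ[ℝ] Ed d) hB)).ne_zero
    have e : (B : Ed d →ₗ[ℝ] Ed d) = (LinearEquiv.ofInjectiveEndo (B : Ed d →ₗ[ℝ] Ed d) hB : Ed d →ₗ[ℝ] Ed d) := by
      ext1 v; rfl
    rw [e]; exact this
  refine ⟨ENNReal.ofReal |(LinearMap.det (B : Ed d →ₗ[ℝ] Ed d))⁻¹|, ENNReal.ofReal_ne_top, ?_⟩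
  intro G hG
  have := Measure.map_linearMap_addHaar_eq_smul_addHaar (volume : Measure (Ed d)) hdet
  rw [← smul_eq_mul, ← lintegral_smul_measure, ← this, lintegral_map hG]
  · rfl
  · exact B.continuous.measurable

lemma wt_le_comp (B : Ed d →L[ℝ] Ed d) (hB : Function.Injective B) (q : ℝ) (hq : 0 < q) :
    ∃ c : ℝ≥0∞, c ≠ ∞ ∧ ∀ h, wt d q h ≤ c * wt d q (B h) := by
  refine ⟨ENNReal.ofReal (‖B‖ ^ q), ENNReal.ofReal_ne_top, fun h => ?_⟩
  unfold wt
  rw [← ENNReal.ofReal_mul (by positivity)]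
  apply ENNReal.ofReal_le_ofReal
  by_cases hh : h = 0
  · subst hh; simp [Real.zero_rpow hq.ne']
  · have h1 : 0 < ‖h‖ := norm_pos_iff.2 hh
    have h2 : 0 < ‖B h‖ := norm_pos_iff.2 fun h0 => hh (hB (by simpa using h0))
    have h3 : ‖B h‖ ^ q ≤ ‖B‖ ^ q * ‖h‖ ^ q := by
      rw [← Real.mul_rpow (norm_nonneg _) (norm_nonneg _)]
      exact Real.rpow_le_rpow h2.le (B.le_opNorm h) hq.le
    have h4 : 0 < ‖h‖ ^ q := by positivity
    have h5 : 0 < ‖B h‖ ^ q := by positivity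
    rw [mul_one_div, div_le_div_iff₀ h4 h5]
    linarith

lemma dInt_linear (S B : Ed d →L[ℝ] Ed d) (hB : Function.Injective B) (q : ℝ) (hq : 0 < q) :
    ∃ c : ℝ≥0∞, c ≠ ∞ ∧ ∀ Φ : Ed d → Ed d → ℝ≥0∞, Measurable (Function.uncurry Φ) →
      ∫⁻ h, (∫⁻ x, Φ (x + S h) (x + S h + B h)) * wt d q h ≤ c * dInt q Φ := by
  obtain ⟨c1, hc1, h1⟩ := lintegral_comp_linear B hB
  obtain ⟨c2, hc2, h2⟩ := wt_le_comp B hB q hq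
  refine ⟨c2 * c1, ENNReal.mul_ne_top hc2 hc1, fun Φ hΦ => ?_⟩
  have hG : Measurable fun h => (∫⁻ x, Φ x (x + h)) * wt d q h := by
    refine Measurable.mul ?_ (measurable_wt q)
    exact Measurable.lintegral_prod_left'
      (f := fun z : Ed d × Ed d => Φ z.1 (z.1 + z.2))
      (hΦ.comp (measurable_fst.prodMk (measurable_fst.add measurable_snd)))
  calc ∫⁻ h, (∫⁻ x, Φ (x + S h) (x + S h + B h)) * wt d q h
      = ∫⁻ h, (∫⁻ x, Φ x (x + B h)) * wt d q h := by
        congr 1; ext h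
        rw [lintegral_add_right_eq_self (fun x => Φ x (x + B h)) (S h)]
    _ ≤ ∫⁻ h, c2 * ((∫⁻ x, Φ x (x + B h)) * wt d q (B h)) := by
        apply lintegral_mono
        intro h
        calc (∫⁻ x, Φ x (x + B h)) * wt d q h
            ≤ (∫⁻ x, Φ x (x + B h)) * (c2 * wt d q (B h)) := by gcongr; exact h2 h
          _ = _ := by ring
    _ = c2 * ∫⁻ h, ((∫⁻ x, Φ x (x + B h)) * wt d q (B h)) := by
        rw [lintegral_const_mul]
        exact hG.comp B.continuous.measurable
    _ = c2 * c1 * dInt q Φ := by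
        rw [h1 _ hG, mul_assoc]; rfl

/-- second differences -/
def sd (g : Ed d → Ed d) (x h : Ed d) : Ed d := g (x + h) - (2:ℝ) • g x + g (x - h)

/-- p-th power of the projected difference -/
def Phi (p : ℝ) (g : Ed d → Ed d) (x y : Ed d) : ℝ≥0∞ := ENNReal.ofReal (pE g x y) ^ p

lemma measurable_Phi (p : ℝ) (g : Ed d → Ed d) (hg : Measurable g) :
    Measurable (Function.uncurry (Phi p g)) := by
  unfold Function.uncurry Phi pE
  fun_prop

lemma korn_data : ∃ S B : Idx d → (Ed d →L[ℝ] Ed d), (∀ i, Function.Injective (B i)) ∧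
    ∃ K : ℝ, 0 ≤ K ∧ ∀ (g : Ed d → Ed d) (x h : Ed d),
    ‖g (x + h) - (2:ℝ) • g x + g (x - h)‖ ≤ K * ∑ i, pE g (x + S i h) (x + S i h + B i h) :=
  ⟨fun i => Sm (Am i.1) i.2, fun i => Bm (Am i.1) i.2,
    fun i => inj_of_close _ (Tm_le i.1) i.2, korn_pointwise⟩

lemma meas_comp2 {α : Type*} [MeasurableSpace α] (Φ : Ed d → Ed d → ℝ≥0∞)
    (hΦ : Measurable (Function.uncurry Φ)) (a b : α → Ed d) (ha : Measurable a)
    (hb : Measurable b) : Measurable fun z => Φ (a z) (b z) := hΦ.comp (ha.prodMk hb)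

lemma sum_step (q : ℝ) (S B : Idx d → (Ed d →L[ℝ] Ed d)) (C : ℝ≥0∞) (c : Idx d → ℝ≥0∞)
    (Φ : Ed d → Ed d → ℝ≥0∞) (_hΦ : Measurable (Function.uncurry Φ))
    (hcb : ∀ i, ∫⁻ h, (∫⁻ x, Φ (x + S i h) (x + S i h + B i h)) * wt d q h ≤ c i * dInt q Φ)
    (D : Ed d → Ed d → ℝ≥0∞)
    (hmeas : ∀ i : Idx d, Measurable fun z : Ed d × Ed d =>
      Φ (z.1 + S i z.2) (z.1 + S i z.2 + B i z.2))
    (pt : ∀ x h, D x h ≤ C * ∑ i : Idx d, Φ (x + S i h) (x + S i h + B i h)) :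
    ∫⁻ h, (∫⁻ x, D x h) * wt d q h ≤ (C * ∑ i, c i) * dInt q Φ := by
  calc ∫⁻ h, (∫⁻ x, D x h) * wt d q h
      ≤ ∫⁻ h, (∫⁻ x, C * ∑ i : Idx d, Φ (x + S i h)
          (x + S i h + B i h)) * wt d q h := by
        apply lintegral_mono
        intro h
        dsimp only
        gcongr with x
        exact pt x h
    _ = ∫⁻ h, ∑ i : Idx d, C * ((∫⁻ x, Φ (x + S i h)
          (x + S i h + B i h)) * wt d q h) := by
        congr 1; ext h
        have hm : ∀ i : Idx d, Measurable fun x => Φ (x + S i h)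
          (x + S i h + B i h) := fun i =>
            (hmeas i).comp (measurable_id.prodMk (measurable_const (a := h)))
        rw [lintegral_const_mul _ (Finset.measurable_sum _ fun i _ => hm i),
          lintegral_finsetSum _ fun i _ => hm i, Finset.mul_sum, Finset.sum_mul]
        exact Finset.sum_congr rfl fun i _ => mul_assoc _ _ _
    _ = ∑ i : Idx d, C * ∫⁻ h, ((∫⁻ x, Φ (x + S i h)
          (x + S i h + B i h)) * wt d q h) := by
        have hm : ∀ i : Idx d, Measurable fun h => (∫⁻ x, Φ (x + S i h)
          (x + S i h + B i h)) * wt d q h := fun i =>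
            (Measurable.lintegral_prod_left' (hmeas i)).mul (measurable_wt q)
        rw [lintegral_finsetSum _ fun i _ => (hm i).const_mul _]
        refine Finset.sum_congr rfl fun i _ => lintegral_const_mul _ (hm i)
    _ ≤ ∑ i : Idx d, C * (c i * dInt q Φ) := by
        gcongr with i
        exact hcb i
    _ = _ := by rw [← Finset.mul_sum, ← Finset.sum_mul, mul_assoc]

lemma second_diff_bound (p q : ℝ) (hp : 1 ≤ p) (hq : 0 < q) :
    ∃ c : ℝ≥0∞, c ≠ ∞ ∧ ∀ g : Ed d → Ed d, Measurable g →
      ∫⁻ h, (∫⁻ x, ‖sd g x h‖ₑ ^ p) * wt d q h ≤ c * dInt q (Phi p g) := by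
  obtain ⟨S, B, hB, K, hK, hpt⟩ := korn_data (d := d)
  choose c hc hcb using fun i : Idx d => dInt_linear (S i) (B i) (hB i) q hq
  set N : ℝ≥0∞ := ((Finset.univ : Finset (Idx d)).card : ℝ≥0∞) with hN
  set C : ℝ≥0∞ := ENNReal.ofReal K ^ p * N ^ (p - 1) with hC
  have hCt : C ≠ ∞ := by
    apply ENNReal.mul_ne_top
    · exact ENNReal.rpow_ne_top_of_nonneg (by linarith) ENNReal.ofReal_ne_top
    · exact ENNReal.rpow_ne_top_of_nonneg (by linarith) (ENNReal.natCast_ne_top _)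
  refine ⟨C * ∑ i, c i, ENNReal.mul_ne_top hCt (ENNReal.sum_ne_top.2 fun i _ => hc i), ?_⟩
  intro g hg
  have hΦ := measurable_Phi p g hg
  have hmeas : ∀ i : Idx d, Measurable fun z : Ed d × Ed d =>
      Phi p g (z.1 + S i z.2) (z.1 + S i z.2 + B i z.2) := by
    intro i
    have m1 : Measurable fun z : Ed d × Ed d => z.1 + S i z.2 :=
      measurable_fst.add ((S i).continuous.measurable.comp measurable_snd)
    have m2 : Measurable fun z : Ed d × Ed d => z.1 + S i z.2 + B i z.2 :=
      m1.add ((B i).continuous.measurable.comp measurable_snd)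
    exact meas_comp2 _ hΦ _ _ m1 m2
  have pt : ∀ x h, ‖sd g x h‖ₑ ^ p ≤ C * ∑ i : Idx d,
      Phi p g (x + S i h) (x + S i h + B i h) := by
    intro x h
    have h1 := hpt g x h
    have h2 : ‖sd g x h‖ₑ ≤ ENNReal.ofReal K * ∑ i : Idx d, ENNReal.ofReal
        (pE g (x + S i h) (x + S i h + B i h)) := by
      rw [← ENNReal.ofReal_sum_of_nonneg (fun i _ => pE_nonneg _ _ _), ← ENNReal.ofReal_mul hK,
        ← ofReal_norm]
      exact ENNReal.ofReal_le_ofReal h1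
    calc ‖sd g x h‖ₑ ^ p ≤ _ := ENNReal.rpow_le_rpow h2 (by linarith)
      _ = ENNReal.ofReal K ^ p * _ := ENNReal.mul_rpow_of_nonneg _ _ (by linarith)
      _ ≤ ENNReal.ofReal K ^ p * _ :=
          mul_le_mul_right (ENNReal.rpow_sum_le_const_mul_sum_rpow _ _ hp) _
      _ = _ := by rw [← mul_assoc]; rfl
  exact sum_step q S B C c _ hΦ (fun i => hcb i _ hΦ) (fun x h => ‖sd g x h‖ₑ ^ p) hmeas pt

/-- translation difference norm -/
def Ft (p : ℝ) (g : Ed d → Ed d) (h : Ed d) : ℝ≥0∞ := ∫⁻ x, ‖g (x + h) - g x‖ₑ ^ p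

lemma measurable_Ft (p : ℝ) (g : Ed d → Ed d) (hg : Measurable g) : Measurable (Ft p g) := by
  unfold Ft
  exact Measurable.lintegral_prod_left' (f := fun z : Ed d × Ed d => ‖g (z.1 + z.2) - g z.1‖ₑ ^ p)
    (by fun_prop)

/-- second difference norm -/
def Gt (p : ℝ) (g : Ed d → Ed d) (h : Ed d) : ℝ≥0∞ := ∫⁻ x, ‖sd g x h‖ₑ ^ p

lemma measurable_Gt (p : ℝ) (g : Ed d → Ed d) (hg : Measurable g) : Measurable (Gt p g) := by
  unfold Gt sd
  exact Measurable.lintegral_prod_left' (f := fun z : Ed d × Ed d =>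
    ‖g (z.1 + z.2) - (2:ℝ) • g z.1 + g (z.1 - z.2)‖ₑ ^ p)
    (by fun_prop)

lemma Ft_le (s p : ℝ) (hs1 : s < 1) (hp : 1 ≤ p) :
    ∃ c : ℝ≥0∞, c ≠ ∞ ∧ ∀ g : Ed d → Ed d, Measurable g → ∀ h : Ed d,
      Ft p g h ≤ ENNReal.ofReal (2 ^ (s - 1) * 2 ^ (-(s * p))) * Ft p g ((2:ℝ) • h) + c * Gt p g h := by
  set θ : ℝ := 2 ^ (s - 1) with hθ
  have hθ0 : 0 < θ := by positivity
  have hθ1 : θ < 1 := Real.rpow_lt_one_of_one_lt_of_neg (by norm_num) (by linarith)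
  have hη : 0 < 1 - θ := by linarith
  refine ⟨ENNReal.ofReal (1 - θ) * ENNReal.ofReal (1 / (2 * (1 - θ))) ^ p,
    ENNReal.mul_ne_top ENNReal.ofReal_ne_top
      (ENNReal.rpow_ne_top_of_nonneg (by linarith) ENNReal.ofReal_ne_top), ?_⟩
  intro g hg h
  have hw : ENNReal.ofReal θ + ENNReal.ofReal (1 - θ) = 1 := by
    rw [← ENNReal.ofReal_add hθ0.le hη.le]; simp
  have hc : ENNReal.ofReal (θ * 2 ^ (-(s * p))) =
      ENNReal.ofReal θ * ENNReal.ofReal (1 / (2 * θ)) ^ p := by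
    rw [ENNReal.ofReal_rpow_of_nonneg (by positivity) (by linarith), ← ENNReal.ofReal_mul hθ0.le]
    congr 2
    have : 1 / (2 * θ) = 2 ^ (-s) := by
      rw [hθ, Real.rpow_sub (by norm_num), Real.rpow_neg (by norm_num)]
      simp; field_simp
    rw [this, ← Real.rpow_mul (by norm_num)]
    congr 1; ring
  have pt : ∀ x, ‖g (x + h) - g x‖ₑ ^ p ≤
      ENNReal.ofReal (θ * 2 ^ (-(s * p))) * ‖g (x + (2:ℝ) • h) - g x‖ₑ ^ p +
      ENNReal.ofReal (1 - θ) * ENNReal.ofReal (1 / (2 * (1 - θ))) ^ p * ‖sd g (x + h) h‖ₑ ^ p := by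
    intro x
    have h1 : g (x + h) - g x = (1/2 : ℝ) • (g (x + (2:ℝ) • h) - g x) - (1/2 : ℝ) • sd g (x + h) h := by
      have e1 : x + (2:ℝ) • h = x + h + h := by module
      unfold sd
      rw [e1, add_sub_cancel_right]
      module
    have h2 : ‖g (x + h) - g x‖ₑ ≤ ENNReal.ofReal (1/2) * ‖g (x + (2:ℝ) • h) - g x‖ₑ +
        ENNReal.ofReal (1/2) * ‖sd g (x + h) h‖ₑ := by
      rw [h1]
      refine (enorm_sub_le).trans ?_
      rw [enorm_smul, enorm_smul, Real.enorm_eq_ofReal (by norm_num)]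
    have e1 : ENNReal.ofReal (1/2) = ENNReal.ofReal θ * ENNReal.ofReal (1 / (2 * θ)) := by
      rw [← ENNReal.ofReal_mul hθ0.le]; congr 1; field_simp
    have e2 : ENNReal.ofReal (1/2) = ENNReal.ofReal (1 - θ) * ENNReal.ofReal (1 / (2 * (1 - θ))) := by
      rw [← ENNReal.ofReal_mul hη.le]; congr 1; field_simp
    have h3 := ENNReal.rpow_arith_mean_le_arith_mean2_rpow _ _
      (ENNReal.ofReal (1 / (2 * θ)) * ‖g (x + (2:ℝ) • h) - g x‖ₑ)
      (ENNReal.ofReal (1 / (2 * (1 - θ))) * ‖sd g (x + h) h‖ₑ) hw hp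
    rw [← mul_assoc, ← mul_assoc, ← e1, ← e2, ENNReal.mul_rpow_of_nonneg _ _ (by linarith),
      ENNReal.mul_rpow_of_nonneg _ _ (by linarith), ← mul_assoc, ← mul_assoc, ← hc] at h3
    exact (ENNReal.rpow_le_rpow h2 (by linarith)).trans h3
  unfold Ft
  calc _ ≤ _ := lintegral_mono pt
    _ = _ := by
      rw [lintegral_add_left (by fun_prop), lintegral_const_mul _ (by fun_prop), lintegral_const_mul]
      · rw [lintegral_add_right_eq_self (fun x => ‖sd g x h‖ₑ ^ p) h]; rfl
      · unfold sd; fun_prop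

lemma lintegral_two_smul (G : Ed d → ℝ≥0∞) (hG : Measurable G) :
    ∫⁻ h, G ((2:ℝ) • h) = ENNReal.ofReal (2 ^ (-(d:ℝ))) * ∫⁻ h, G h := by
  have := Measure.map_addHaar_smul (volume : Measure (Ed d)) (r := (2:ℝ)) (by norm_num)
  rw [← lintegral_map hG (by fun_prop), this, lintegral_smul_measure, smul_eq_mul]
  congr 2
  rw [Real.rpow_neg (by norm_num), Real.rpow_natCast]
  simp

lemma wt_two (q : ℝ) (h : Ed d) : wt d q h = ENNReal.ofReal (2 ^ q) * wt d q ((2:ℝ) • h) := by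
  unfold wt
  rw [← ENNReal.ofReal_mul (by positivity), norm_smul, Real.mul_rpow (by norm_num) (norm_nonneg _)]
  congr 1
  have : (0:ℝ) < 2 ^ q := by positivity
  simp
  field_simp

/-- truncated Gagliardo -/
def Nt (p q : ℝ) (g : Ed d → Ed d) (ε : ℝ) : ℝ≥0∞ := ∫⁻ h in {h : Ed d | ε < ‖h‖}, Ft p g h * wt d q h

lemma measurableSet_tr (ε : ℝ) : MeasurableSet {h : Ed d | ε < ‖h‖} :=
  measurableSet_lt measurable_const measurable_norm

lemma Nt_double (p q ε : ℝ) (hε : 0 ≤ ε) (g : Ed d → Ed d) (hg : Measurable g) :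
    ∫⁻ h in {h : Ed d | ε < ‖h‖}, Ft p g ((2:ℝ) • h) * wt d q h ≤
      ENNReal.ofReal (2 ^ (q - d)) * Nt p q g ε := by
  have hm : Measurable fun h => Ft p g h * wt d q h := (measurable_Ft p g hg).mul (measurable_wt q)
  have e : ∀ h : Ed d, ({h : Ed d | ε < ‖h‖}.indicator
      (fun h => Ft p g ((2:ℝ) • h) * wt d q h)) h ≤
      ENNReal.ofReal (2 ^ q) *
        ({h : Ed d | ε < ‖h‖}.indicator (fun h => Ft p g h * wt d q h)) ((2:ℝ) • h) := by
    intro h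
    by_cases hh : ε < ‖h‖
    · have h2 : ε < ‖(2:ℝ) • h‖ := by
        rw [norm_smul]; simp; linarith
      rw [Set.indicator_of_mem (by exact hh), Set.indicator_of_mem (by exact h2), wt_two]
      exact le_of_eq (by ring)
    · rw [Set.indicator_of_notMem (by exact hh)]
      exact zero_le
  rw [← lintegral_indicator (measurableSet_tr ε)]
  refine (lintegral_mono e).trans ?_
  have hm2 := hm.indicator (measurableSet_tr (d := d) ε)
  have hm3 : Measurable fun h : Ed d =>
      ({h : Ed d | ε < ‖h‖}.indicator (fun h => Ft p g h * wt d q h)) ((2:ℝ) • h) :=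
    hm2.comp (measurable_const_smul (2:ℝ))
  rw [lintegral_const_mul _ hm3, lintegral_two_smul _ hm2,
    lintegral_indicator (measurableSet_tr ε), ← mul_assoc, ← ENNReal.ofReal_mul (by positivity),
    ← Real.rpow_add (by norm_num), ← sub_eq_add_neg]
  rfl

lemma Ft_bdd (p : ℝ) (hp : 1 ≤ p) (g : Ed d → Ed d) (hg : Measurable g)
    (hgp : ∫⁻ x, ‖g x‖ₑ ^ p ≠ ∞) : ∃ M : ℝ≥0∞, M ≠ ∞ ∧ ∀ h, Ft p g h ≤ M := by
  refine ⟨2 ^ (p - 1) * ((∫⁻ x, ‖g x‖ₑ ^ p) + ∫⁻ x, ‖g x‖ₑ ^ p), ENNReal.mul_ne_top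
    (ENNReal.rpow_ne_top_of_nonneg (by linarith) (by norm_num)) (ENNReal.add_ne_top.2 ⟨hgp, hgp⟩), ?_⟩
  intro h
  calc Ft p g h ≤ ∫⁻ x, 2 ^ (p - 1) * (‖g (x + h)‖ₑ ^ p + ‖g x‖ₑ ^ p) := by
        apply lintegral_mono
        intro x
        exact (ENNReal.rpow_le_rpow enorm_sub_le (by linarith)).trans
          (ENNReal.rpow_add_le_mul_rpow_add_rpow _ _ hp)
    _ = _ := by
      rw [lintegral_const_mul _ (by fun_prop), lintegral_add_left (by fun_prop),
        lintegral_add_right_eq_self (fun x => ‖g x‖ₑ ^ p) h]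

lemma wt_tail (q ε : ℝ) (hq : (d:ℝ) < q) (hε : 0 < ε) :
    ∫⁻ h in {h : Ed d | ε < ‖h‖}, wt d q h ≠ ∞ := by
  have hq0 : 0 < q := lt_of_le_of_lt (Nat.cast_nonneg d) hq
  have h1 := finite_integral_one_add_norm (μ := (volume : Measure (Ed d))) (r := q) (by simpa using hq)
  have h2 : ∫⁻ h in {h : Ed d | ε < ‖h‖}, wt d q h ≤
      ∫⁻ h : Ed d, ENNReal.ofReal ((1 / ε + 1) ^ q) * ENNReal.ofReal ((1 + ‖h‖) ^ (-q)) := by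
    rw [← lintegral_indicator (measurableSet_tr ε)]
    apply lintegral_mono
    intro h
    by_cases hh : ε < ‖h‖
    · rw [Set.indicator_of_mem (by exact hh)]
      unfold wt
      dsimp only
      rw [← ENNReal.ofReal_mul (by positivity)]
      apply ENNReal.ofReal_le_ofReal
      have hn : 0 < ‖h‖ := hε.trans hh
      rw [one_div, Real.rpow_neg (by positivity), ← div_eq_mul_inv,
        ← Real.div_rpow (by positivity) (by positivity), ← Real.inv_rpow (by positivity)]
      apply Real.rpow_le_rpow (by positivity) _ hq0.le
      rw [inv_eq_one_div, div_le_div_iff₀ hn (by positivity)]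
      have : 1 ≤ 1 / ε * ‖h‖ := by
        rw [one_div, inv_mul_eq_div, le_div_iff₀ hε]; linarith
      linarith
    · rw [Set.indicator_of_notMem (by exact hh)]
      exact zero_le
  refine (lt_of_le_of_lt h2 ?_).ne
  rw [lintegral_const_mul _ (by fun_prop)]
  exact ENNReal.mul_lt_top ENNReal.ofReal_lt_top h1

lemma Nt_ne_top (p q ε : ℝ) (hp : 1 ≤ p) (hq : (d:ℝ) < q) (hε : 0 < ε) (g : Ed d → Ed d)
    (hg : Measurable g) (hgp : ∫⁻ x, ‖g x‖ₑ ^ p ≠ ∞) : Nt p q g ε ≠ ∞ := by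
  obtain ⟨M, hM, hb⟩ := Ft_bdd p hp g hg hgp
  have : Nt p q g ε ≤ M * ∫⁻ h in {h : Ed d | ε < ‖h‖}, wt d q h := by
    rw [← lintegral_const_mul _ (measurable_wt q)]
    apply lintegral_mono
    intro h
    dsimp only
    gcongr
    exact hb h
  exact ne_top_of_le_ne_top (ENNReal.mul_ne_top hM (wt_tail q ε hq hε)) this

lemma Nt_bound (s p : ℝ) (hs0 : 0 < s) (hs1 : s < 1) (hp : 1 ≤ p) :
    ∃ c : ℝ≥0∞, c ≠ ∞ ∧ ∀ g : Ed d → Ed d, Measurable g → ∫⁻ x, ‖g x‖ₑ ^ p ≠ ∞ → ∀ ε : ℝ, 0 < ε →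
      Nt p (d + s * p) g ε ≤ c * ∫⁻ h, Gt p g h * wt d (d + s * p) h := by
  obtain ⟨c, hc, hF⟩ := Ft_le (d := d) s p hs1 hp
  set q : ℝ := d + s * p with hq
  have hqd : (d:ℝ) < q := by rw [hq]; have : 0 < s * p := by positivity
                             linarith
  set θ : ℝ := 2 ^ (s - 1) with hθ
  have hθ0 : 0 < θ := by positivity
  have hθ1 : θ < 1 := Real.rpow_lt_one_of_one_lt_of_neg (by norm_num) (by linarith)
  have hη : 0 < 1 - θ := by linarith
  have hη' : ENNReal.ofReal (1 - θ) ≠ 0 := by simpa using hη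
  refine ⟨(ENNReal.ofReal (1 - θ))⁻¹ * c, ENNReal.mul_ne_top (ENNReal.inv_ne_top.2 hη') hc, ?_⟩
  intro g hg hgp ε hε
  have hfin := Nt_ne_top p q ε hp hqd hε g hg hgp
  have hmw := measurable_wt (d := d) q
  have hmF := measurable_Ft p g hg
  have hmG := measurable_Gt p g hg
  have step : Nt p q g ε ≤ ENNReal.ofReal θ * Nt p q g ε + c * ∫⁻ h, Gt p g h * wt d q h := by
    calc Nt p q g ε ≤ ∫⁻ h in {h : Ed d | ε < ‖h‖},
          (ENNReal.ofReal (θ * 2 ^ (-(s * p))) * (Ft p g ((2:ℝ) • h) * wt d q h)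
            + c * (Gt p g h * wt d q h)) := by
          apply lintegral_mono
          intro h
          dsimp only
          rw [← mul_assoc, ← mul_assoc, ← add_mul]
          gcongr
          exact hF g hg h
      _ = ENNReal.ofReal (θ * 2 ^ (-(s * p))) * (∫⁻ h in {h : Ed d | ε < ‖h‖},
            Ft p g ((2:ℝ) • h) * wt d q h)
            + c * ∫⁻ h in {h : Ed d | ε < ‖h‖}, Gt p g h * wt d q h := by
          have m1 : Measurable fun h : Ed d => Ft p g ((2:ℝ) • h) * wt d q h :=
            (hmF.comp (measurable_const_smul (2:ℝ))).mul hmw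
          have m2 : Measurable fun h : Ed d => Gt p g h * wt d q h := hmG.mul hmw
          rw [lintegral_add_left (m1.const_mul _), lintegral_const_mul _ m1,
            lintegral_const_mul _ m2]
      _ ≤ ENNReal.ofReal (θ * 2 ^ (-(s * p))) * (ENNReal.ofReal (2 ^ (q - d)) * Nt p q g ε)
            + c * ∫⁻ h, Gt p g h * wt d q h := by
          gcongr
          · exact Nt_double p q ε hε.le g hg
          · exact Measure.restrict_le_self
      _ = _ := by
          rw [← mul_assoc, ← ENNReal.ofReal_mul (by positivity), mul_assoc θ,
            ← Real.rpow_add (by norm_num)]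
          congr 3
          rw [hq]; simp
  have hsum : ENNReal.ofReal θ * Nt p q g ε + ENNReal.ofReal (1 - θ) * Nt p q g ε = Nt p q g ε := by
    rw [← add_mul, ← ENNReal.ofReal_add hθ0.le hη.le]; simp
  have step2 : ENNReal.ofReal θ * Nt p q g ε + ENNReal.ofReal (1 - θ) * Nt p q g ε ≤
      ENNReal.ofReal θ * Nt p q g ε + c * ∫⁻ h, Gt p g h * wt d q h := by
    rw [hsum]; exact step
  have step3 := (ENNReal.add_le_add_iff_left
    (ENNReal.mul_ne_top ENNReal.ofReal_ne_top hfin)).1 step2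
  rw [mul_assoc]
  calc Nt p q g ε = (ENNReal.ofReal (1 - θ))⁻¹ * (ENNReal.ofReal (1 - θ) * Nt p q g ε) := by
        rw [← mul_assoc, ENNReal.inv_mul_cancel hη' ENNReal.ofReal_ne_top, one_mul]
    _ ≤ _ := by gcongr

lemma full_le (p q : ℝ) (hq : 0 < q) (g : Ed d → Ed d) (K : ℝ≥0∞)
    (hK : ∀ ε : ℝ, 0 < ε → Nt p q g ε ≤ K) :
    ∫⁻ h, Ft p g h * wt d q h ≤ K := by
  let A : ℕ → Set (Ed d) := fun n => {h : Ed d | 1 / ((n:ℝ) + 1) < ‖h‖}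
  have hdir : Directed (· ⊆ ·) A := by
    apply Monotone.directed_le
    intro m n hmn h hh
    have hle : 1 / ((n:ℝ) + 1) ≤ 1 / ((m:ℝ) + 1) :=
      one_div_le_one_div_of_le (by positivity) (add_le_add (Nat.cast_le.2 hmn) le_rfl)
    exact lt_of_le_of_lt hle hh
  have h1 : ∫⁻ h, Ft p g h * wt d q h = ∫⁻ h in ⋃ n, A n, Ft p g h * wt d q h := by
    rw [← lintegral_indicator (MeasurableSet.iUnion fun n => measurableSet_tr _)]
    congr 1
    ext h
    by_cases hh : h = 0
    · subst hh
      have : wt d q 0 = 0 := by simp [wt, Real.zero_rpow hq.ne']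
      simp [Set.indicator, this]
    · rw [Set.indicator_of_mem]
      obtain ⟨n, hn⟩ := exists_nat_one_div_lt (norm_pos_iff.2 hh)
      exact Set.mem_iUnion.2 ⟨n, hn⟩
  rw [h1, setLIntegral_iUnion_of_directed _ hdir]
  exact iSup_le fun n => hK _ (by positivity)

lemma gag_eq (s p : ℝ) (hp : 1 < p) (g : Ed d → Ed d) (hg : Measurable g) :
    gagP d s p Set.univ g = ∫⁻ h, Ft p g h * wt d (d + s * p) h := by
  have := lintegral_eq_dInt (d := d) (d + s * p) (fun x y => ‖g y - g x‖ₑ ^ p)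
    (by unfold Function.uncurry; fun_prop)
  unfold dInt at this
  unfold gagP Ft
  rw [← this]
  simp only [Measure.restrict_univ]
  congr 1; ext x; congr 1; ext y
  unfold wt
  rw [← ofReal_norm, ENNReal.ofReal_rpow_of_nonneg (norm_nonneg _) (by linarith),
    ← ENNReal.ofReal_mul (by positivity), mul_one_div]

lemma proj_eq (s p : ℝ) (hp : 1 < p) (g : Ed d → Ed d) (hg : Measurable g) :
    projGagP d s p Set.univ g = dInt (d + s * p) (Phi p g) := by
  rw [← lintegral_eq_dInt (d := d) (d + s * p) _ (measurable_Phi p g hg)]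
  unfold projGagP
  simp only [Measure.restrict_univ]
  congr 1; ext x; congr 1; ext y
  unfold wt Phi
  rw [ENNReal.ofReal_rpow_of_nonneg (pE_nonneg _ _ _) (by linarith),
    ← ENNReal.ofReal_mul (Real.rpow_nonneg (pE_nonneg _ _ _) _), mul_one_div]
  rfl

lemma gag_congr (s p : ℝ) (f g : Ed d → Ed d) (h : f =ᵐ[volume] g) :
    gagP d s p Set.univ f = gagP d s p Set.univ g := by
  unfold gagP
  simp only [Measure.restrict_univ]
  refine lintegral_congr_ae ?_
  filter_upwards [h] with x hx
  refine lintegral_congr_ae ?_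
  filter_upwards [h] with y hy
  rw [hx, hy]

lemma proj_congr (s p : ℝ) (f g : Ed d → Ed d) (h : f =ᵐ[volume] g) :
    projGagP d s p Set.univ f = projGagP d s p Set.univ g := by
  unfold projGagP
  simp only [Measure.restrict_univ]
  refine lintegral_congr_ae ?_
  filter_upwards [h] with x hx
  refine lintegral_congr_ae ?_
  filter_upwards [h] with y hy
  rw [hx, hy]

lemma proj_le_gag (s p : ℝ) (hp : 1 < p) (f : Ed d → Ed d) :
    projGagP d s p Set.univ f ≤ gagP d s p Set.univ f := by
  unfold projGagP gagP
  refine lintegral_mono fun x => lintegral_mono fun y => ENNReal.ofReal_le_ofReal ?_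
  refine div_le_div_of_nonneg_right ?_ (by positivity)
  refine Real.rpow_le_rpow (by positivity) ?_ (by linarith)
  exact div_le_of_le_mul₀ (norm_nonneg _) (norm_nonneg _) (abs_real_inner_le_norm _ _)

lemma gag_le_proj (s p : ℝ) (hs : s ∈ Set.Ioo (0 : ℝ) 1) (hp : 1 < p) :
    ∃ c : ℝ≥0∞, c ≠ ∞ ∧ ∀ f : Ed d → Ed d, MemLp f (ENNReal.ofReal p) volume →
      gagP d s p Set.univ f ≤ c * projGagP d s p Set.univ f := by
  have hsp : 0 < s * p := mul_pos hs.1 (by linarith)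
  have hq : (0:ℝ) < d + s * p := by positivity
  obtain ⟨c1, hc1, h1⟩ := Nt_bound (d := d) s p hs.1 hs.2 hp.le
  obtain ⟨c2, hc2, h2⟩ := second_diff_bound (d := d) p (d + s * p) hp.le hq
  refine ⟨c1 * c2, ENNReal.mul_ne_top hc1 hc2, fun f hf => ?_⟩
  obtain ⟨g, hgm, hfg⟩ := hf.1
  have hg := hgm.measurable
  have hgL : MemLp g (ENNReal.ofReal p) volume := hf.ae_eq hfg
  have hgp : ∫⁻ x, ‖g x‖ₑ ^ p ≠ ∞ := by
    have := lintegral_rpow_enorm_lt_top_of_eLpNorm_lt_top (by simpa using by linarith)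
      ENNReal.ofReal_ne_top hgL.2
    rw [ENNReal.toReal_ofReal (by linarith)] at this
    exact this.ne
  rw [gag_congr s p f g hfg, proj_congr s p f g hfg, gag_eq s p hp g hg, proj_eq s p hp g hg]
  refine full_le p _ hq g _ fun ε hε => (h1 g hg hgp ε hε).trans ?_
  rw [mul_assoc]
  gcongr
  exact h2 g hg

end Korn

/-- **Fractional Korn's inequality on the whole space.**
For `d ≥ 1`, `s ∈ (0,1)` and `1 < p < ∞`: every `f ∈ L^p(ℝ^d; ℝ^d)` satisfies
`[f]_{𝒳^s_p(ℝ^d)} ≤ [f]_{W^{s,p}(ℝ^d)}`, there is a constant `C = C(d,p,s) > 0` with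
`[f]_{W^{s,p}(ℝ^d)} ≤ C [f]_{𝒳^s_p(ℝ^d)}`, and in particular `[f]_{W^{s,p}}` is finite
iff `[f]_{𝒳^s_p}` is finite. -/
theorem fractional_korn_whole_space (d : ℕ) (hd : 1 ≤ d) (s p : ℝ)
    (hs : s ∈ Set.Ioo (0 : ℝ) 1) (hp : 1 < p) :
    (∀ f : Ed d → Ed d, MemLp f (ENNReal.ofReal p) volume →
      projSem d s p Set.univ f ≤ gagSem d s p Set.univ f) ∧
    (∃ C : ℝ, 0 < C ∧ ∀ f : Ed d → Ed d, MemLp f (ENNReal.ofReal p) volume →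
      gagSem d s p Set.univ f ≤ ENNReal.ofReal C * projSem d s p Set.univ f) ∧
    (∀ f : Ed d → Ed d, MemLp f (ENNReal.ofReal p) volume →
      (gagSem d s p Set.univ f < ∞ ↔ projSem d s p Set.univ f < ∞)) := by
  have hp0 : 0 ≤ 1 / p := by positivity
  have part1 : ∀ f : Ed d → Ed d, projSem d s p Set.univ f ≤ gagSem d s p Set.univ f :=
    fun f => ENNReal.rpow_le_rpow (proj_le_gag s p hp f) hp0
  have part2 : ∃ C : ℝ, 0 < C ∧ ∀ f : Ed d → Ed d, MemLp f (ENNReal.ofReal p) volume →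
      gagSem d s p Set.univ f ≤ ENNReal.ofReal C * projSem d s p Set.univ f := by
    obtain ⟨c, hc, h⟩ := gag_le_proj (d := d) s p hs hp
    refine ⟨(c ^ (1 / p)).toReal + 1, by positivity, fun f hf => ?_⟩
    unfold gagSem projSem
    refine (ENNReal.rpow_le_rpow (h f hf) hp0).trans ?_
    rw [ENNReal.mul_rpow_of_nonneg _ _ hp0]
    gcongr
    rw [ENNReal.le_ofReal_iff_toReal_le (ENNReal.rpow_ne_top_of_nonneg hp0 hc) (by positivity)]
    linarith
  refine ⟨fun f _ => part1 f, part2, fun f hf => ⟨fun h => (part1 f).trans_lt h, fun h => ?_⟩⟩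
  obtain ⟨C, _, hC⟩ := part2
  exact (hC f hf).trans_lt (ENNReal.mul_lt_top ENNReal.ofReal_lt_top h)
end
end

section
/- Let s ∈ (0,1), 1 < p < ∞, and f ∈ L^p(ℝ^d) be a scalar function with Poisson integral u(x,t) = (p_t ∗ f)(x). Then there exists a constant C = C(d) > 0 such that ∫_{ℝ^d} ∫_{ℝ^d} |u(x + y, |y|) − u(x, |y|)|^p / |y|^{d+sp} dx dy ≤ C ∫_0^∞ ‖∇_x u(·,t)‖_{L^p(ℝ^d)}^p / t^{sp−p+1} dt. -/
open MeasureTheory Filter Set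
open scoped ENNReal NNReal Topology

noncomputable section

/-- The surface measure `ω_d` of the unit sphere in `ℝ^{d+1}`. -/
def sphereVol (d : ℕ) : ℝ :=
  ((d : ℝ) + 1) * (volume (Metric.ball (0 : EuclideanSpace ℝ (Fin (d+1))) 1)).toReal

/-- The Poisson kernel `p_t(x)` for the upper half-space `ℝ^d × (0,∞)`. -/
def poissonKernelEd (d : ℕ) (t : ℝ) (x : Ed d) : ℝ :=
  (2 / sphereVol d) * t / (‖x‖ ^ 2 + t ^ 2) ^ (((d : ℝ) + 1) / 2)

/-- The (componentwise) Poisson integral `u(x,t) = (p_t ∗ f)(x)` of a vector field. -/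
def poissonInt (d m : ℕ) (f : Ed d → Ed m) (x : Ed d) (t : ℝ) : Ed m :=
  ∫ y, poissonKernelEd d t y • f (x - y)

/-- The Poisson integral `u(x,t) = (p_t ∗ f)(x)` of a scalar function. -/
def poissonIntS (d : ℕ) (f : Ed d → ℝ) (x : Ed d) (t : ℝ) : ℝ :=
  ∫ y, poissonKernelEd d t y * f (x - y)

lemma polar_le (d : ℕ) (hd : 0 < d) (H : ℝ → ℝ≥0∞) :
    ∫⁻ y : Ed d, H ‖y‖ ≤ ((d : ℝ≥0∞) * volume (Metric.ball (0 : Ed d) 1)) *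
      ∫⁻ t in Ioi (0 : ℝ), ENNReal.ofReal (t ^ (d - 1)) * H t := by
  have : NeZero d := ⟨hd.ne'⟩
  have hfin : Module.finrank ℝ (Ed d) = d := by simp
  calc ∫⁻ y : Ed d, H ‖y‖
      = ∫⁻ x : ({(0 : Ed d)}ᶜ : Set (Ed d)), H ‖x.1‖ ∂((volume : Measure (Ed d)).comap (↑)) := by
        rw [lintegral_subtype_comap (measurableSet_singleton _).compl (fun x : Ed d => H ‖x‖),
          restrict_compl_singleton]
    _ = ∫⁻ x, H x.2 ∂((volume : Measure (Ed d)).toSphere.prod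
          (Measure.volumeIoiPow (Module.finrank ℝ (Ed d) - 1))) := by
        have := (volume : Measure (Ed d)).measurePreserving_homeomorphUnitSphereProd.lintegral_comp_emb
          (Homeomorph.measurableEmbedding _) (fun z => H (z.2 : ℝ))
        simpa using this
    _ ≤ ∫⁻ _ : Metric.sphere (0 : Ed d) 1, (∫⁻ t, H (t : ℝ)
          ∂(Measure.volumeIoiPow (Module.finrank ℝ (Ed d) - 1)))
          ∂(volume : Measure (Ed d)).toSphere :=
        lintegral_prod_le _
    _ = ((d : ℝ≥0∞) * volume (Metric.ball (0 : Ed d) 1)) *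
        ∫⁻ t, H (t : ℝ) ∂(Measure.volumeIoiPow (Module.finrank ℝ (Ed d) - 1)) := by
        rw [lintegral_const, Measure.toSphere_apply_univ, hfin, mul_comm]
    _ = _ := by
        congr 1
        rw [hfin, Measure.volumeIoiPow, lintegral_withDensity_eq_lintegral_mul_non_measurable]
        · exact lintegral_subtype_comap measurableSet_Ioi
            (fun t : ℝ => ENNReal.ofReal (t ^ (d - 1)) * H t)
        · fun_prop
        · simp

lemma kernel_integrable (d : ℕ) {t : ℝ} (ht : 0 < t) :
    Integrable (fun w : Ed d => (‖w‖ ^ 2 + t ^ 2) ^ (-(((d : ℝ) + 1) / 2))) := by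
  have h0 : Integrable (fun x : Ed d => ((1 : ℝ) + ‖x‖ ^ 2) ^ (-((d : ℝ) + 1) / 2)) :=
    integrable_rpow_neg_one_add_norm_sq (by simp)
  have h1 := (h0.comp_smul (inv_ne_zero ht.ne')).const_mul ((t ^ 2) ^ (-(((d : ℝ) + 1) / 2)))
  refine h1.congr (Eventually.of_forall fun w => ?_)
  simp only
  rw [neg_div, ← Real.mul_rpow (by positivity) (by positivity), norm_smul]
  congr 1
  rw [norm_inv, Real.norm_of_nonneg ht.le]
  field_simp
  ring

lemma kernel_mul_integrable (d : ℕ) {t p : ℝ} (ht : 0 < t) (hp : 1 < p) (f : Ed d → ℝ)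
    (hf : MemLp f (ENNReal.ofReal p) volume) (x : Ed d) :
    Integrable (fun y : Ed d => (‖x - y‖ ^ 2 + t ^ 2) ^ (-(((d : ℝ) + 1) / 2)) * f y) := by
  set k : Ed d → ℝ := fun y => (‖x - y‖ ^ 2 + t ^ 2) ^ (-(((d : ℝ) + 1) / 2)) with hk
  have hki : Integrable k := (kernel_integrable d ht).comp_sub_left x
  have hfp : Integrable (fun y => ‖f y‖ ^ p) := by
    have := hf.integrable_norm_rpow (by simp; linarith) (by simp)
    simpa [ENNReal.toReal_ofReal (by linarith : (0:ℝ) ≤ p)] using this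
  have hk0 : ∀ y, 0 ≤ k y := fun y => by positivity
  have hkb : ∀ y, k y ≤ (t ^ 2) ^ (-(((d : ℝ) + 1) / 2)) := fun y =>
    Real.rpow_le_rpow_of_nonpos (by positivity) (by nlinarith [sq_nonneg ‖x - y‖])
      (by have : (0:ℝ) ≤ d := Nat.cast_nonneg d
          linarith)
  refine (hki.add (hfp.const_mul ((t ^ 2) ^ (-(((d : ℝ) + 1) / 2))))).mono'
    (hki.aestronglyMeasurable.mul hf.aestronglyMeasurable) (Eventually.of_forall fun y => ?_)
  simp only [Pi.add_apply]
  rw [norm_mul, Real.norm_of_nonneg (hk0 y)]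
  have h2 : ‖f y‖ ≤ 1 + ‖f y‖ ^ p := by
    rcases le_total ‖f y‖ 1 with h | h
    · have : 0 ≤ ‖f y‖ ^ p := by positivity
      linarith
    · have := Real.self_le_rpow_of_one_le h hp.le
      linarith
  have h3 : 0 ≤ ‖f y‖ ^ p := by positivity
  calc k y * ‖f y‖ ≤ k y * (1 + ‖f y‖ ^ p) := by gcongr
    _ = k y + k y * ‖f y‖ ^ p := by ring
    _ ≤ _ := by gcongr; exact hkb y

lemma poisson_eq (d : ℕ) (f : Ed d → ℝ) (t : ℝ) :
    (fun x => poissonIntS d f x t) = fun x => (2 / sphereVol d * t) *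
      ∫ y, (‖x - y‖ ^ 2 + t ^ 2) ^ (-(((d : ℝ) + 1) / 2)) * f y := by
  funext x
  rw [poissonIntS, ← integral_sub_left_eq_self _ volume x, ← integral_const_mul]
  congr 1
  funext y
  rw [poissonKernelEd, Real.rpow_neg (by positivity)]
  simp only [sub_sub_cancel]
  ring

lemma poisson_differentiable (d : ℕ) {t p : ℝ} (ht : 0 < t) (hp : 1 < p) (f : Ed d → ℝ)
    (hf : MemLp f (ENNReal.ofReal p) volume) :
    Differentiable ℝ (fun x => poissonIntS d f x t) := by
  rw [poisson_eq]
  refine Differentiable.const_mul (fun x => ?_) _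
  set a : ℝ := ((d : ℝ) + 1) / 2 with ha
  have ha0 : 0 < a := by positivity
  let F' : Ed d → Ed d → (Ed d →L[ℝ] ℝ) := fun z y =>
    f y • ((-a * (‖z - y‖ ^ 2 + t ^ 2) ^ (-a - 1)) • ((2 : ℝ) • innerSL ℝ (z - y)))
  have hD : ∀ y z, HasFDerivAt (fun z : Ed d => (‖z - y‖ ^ 2 + t ^ 2) ^ (-a) * f y) (F' z y) z := by
    intro y z
    have h1 : HasFDerivAt (fun z : Ed d => ‖z - y‖ ^ 2 + t ^ 2) ((2 : ℝ) • innerSL ℝ (z - y)) z := by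
      have := (((hasFDerivAt_id z).sub_const y).norm_sq).add_const (t ^ 2)
      refine this.congr_fderiv ?_
      ext v
      simp
    have h2 := (h1.rpow_const (p := -a) (Or.inl (by positivity))).mul_const (f y)
    exact h2
  refine (hasFDerivAt_integral_of_dominated_of_fderiv_le (s := Metric.ball x t) (F' := F')
    (bound := fun y => ‖(a / t * 3 ^ a) * ((‖x - y‖ ^ 2 + t ^ 2) ^ (-a) * f y)‖)
    (Metric.ball_mem_nhds x ht)
    (Eventually.of_forall fun z => (kernel_mul_integrable d ht hp f hf z).aestronglyMeasurable)
    (kernel_mul_integrable d ht hp f hf x) ?_ ?_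
    ((kernel_mul_integrable d ht hp f hf x).const_mul _).norm
    (Eventually.of_forall fun y z _ => hD y z)).differentiableAt
  · refine hf.aestronglyMeasurable.smul (Continuous.aestronglyMeasurable ?_)
    refine Continuous.smul (continuous_const.mul (Continuous.rpow_const (by fun_prop) ?_))
      (by fun_prop)
    intro y; left; positivity
  · refine Eventually.of_forall fun y z hz => ?_
    rw [Metric.mem_ball, dist_comm, dist_eq_norm] at hz
    have hb : 0 < ‖z - y‖ ^ 2 + t ^ 2 := by positivity
    have hc : 0 < ‖x - y‖ ^ 2 + t ^ 2 := by positivity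
    simp only [F', norm_smul, norm_mul, innerSL_apply_norm, norm_neg]
    rw [Real.norm_of_nonneg ha0.le, Real.norm_of_nonneg (Real.rpow_nonneg hb.le _),
      Real.norm_of_nonneg (Real.rpow_nonneg hc.le _), Real.norm_of_nonneg (by positivity : 0 ≤ a / t),
      Real.norm_of_nonneg (by positivity : (0:ℝ) ≤ 3 ^ a), Real.norm_of_nonneg (zero_le_two : (0:ℝ) ≤ 2)]
    have htri : ‖x - y‖ ≤ t + ‖z - y‖ := by
      calc ‖x - y‖ = ‖(x - z) + (z - y)‖ := by congr 1; abel
        _ ≤ ‖x - z‖ + ‖z - y‖ := norm_add_le _ _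
        _ ≤ _ := by gcongr
    have h3 : (‖x - y‖ ^ 2 + t ^ 2) / 3 ≤ ‖z - y‖ ^ 2 + t ^ 2 := by
      have : ‖x - y‖ ^ 2 ≤ (t + ‖z - y‖) ^ 2 := by gcongr
      nlinarith [sq_nonneg (t - ‖z - y‖)]
    have h4 : (‖z - y‖ ^ 2 + t ^ 2) ^ (-a) ≤ 3 ^ a * (‖x - y‖ ^ 2 + t ^ 2) ^ (-a) := by
      calc (‖z - y‖ ^ 2 + t ^ 2) ^ (-a) ≤ ((‖x - y‖ ^ 2 + t ^ 2) / 3) ^ (-a) :=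
            Real.rpow_le_rpow_of_nonpos (by positivity) h3 (by linarith)
        _ = _ := by
            rw [Real.div_rpow hc.le (by norm_num), Real.rpow_neg (by norm_num : (0:ℝ) ≤ 3)]
            field_simp
    have h5 : (‖z - y‖ ^ 2 + t ^ 2) ^ (-a - 1) * (2 * ‖z - y‖)
        ≤ (1 / t) * (‖z - y‖ ^ 2 + t ^ 2) ^ (-a) := by
      rw [Real.rpow_sub_one hb.ne']
      have h6 : 2 * ‖z - y‖ / (‖z - y‖ ^ 2 + t ^ 2) ≤ 1 / t := by
        rw [div_le_div_iff₀ hb ht]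
        nlinarith [sq_nonneg (t - ‖z - y‖)]
      have h7 : 0 ≤ (‖z - y‖ ^ 2 + t ^ 2) ^ (-a) := by positivity
      calc _ = (2 * ‖z - y‖ / (‖z - y‖ ^ 2 + t ^ 2)) * (‖z - y‖ ^ 2 + t ^ 2) ^ (-a) := by ring
        _ ≤ _ := by gcongr
    calc _ = ‖f y‖ * (a * ((‖z - y‖ ^ 2 + t ^ 2) ^ (-a - 1) * (2 * ‖z - y‖))) := by ring
      _ ≤ ‖f y‖ * (a * ((1 / t) * (3 ^ a * (‖x - y‖ ^ 2 + t ^ 2) ^ (-a)))) := by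
        have h8 := h5.trans (mul_le_mul_of_nonneg_left h4 (by positivity : 0 ≤ 1 / t))
        exact mul_le_mul_of_nonneg_left (mul_le_mul_of_nonneg_left h8 ha0.le) (norm_nonneg _)
      _ = _ := by ring

/-- Pointwise bound along a segment. -/
lemma segment_bound {E : Type*} [NormedAddCommGroup E] [NormedSpace ℝ E] [MeasurableSpace E]
    [BorelSpace E]
    (g : E → ℝ) (hg : Differentiable ℝ g) (x y : E) {p : ℝ} (hp : 1 < p) :
    ‖g (x + y) - g x‖ₑ ^ p ≤ ‖y‖ₑ ^ p * ∫⁻ r in Ioc (0 : ℝ) 1, ‖fderiv ℝ g (x + r • y)‖ₑ ^ p := by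
  have hm : Measurable (fun r : ℝ => ‖fderiv ℝ g (x + r • y)‖ₑ) :=
    ((measurable_fderiv ℝ g).comp (by fun_prop : Continuous fun r : ℝ => x + r • y).measurable).enorm
  have hder : ∀ r : ℝ, HasDerivAt (fun r : ℝ => g (x + r • y)) (fderiv ℝ g (x + r • y) y) r := by
    intro r
    have h1 : HasDerivAt (fun r : ℝ => x + r • y) y r := by
      simpa using ((hasDerivAt_id r).smul_const y).const_add x
    exact (hg (x + r • y)).hasFDerivAt.comp_hasDerivAt r h1
  have hdm : Measurable (fun r : ℝ => fderiv ℝ g (x + r • y) y) := by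
    have : (fun r : ℝ => fderiv ℝ g (x + r • y) y) = deriv (fun r : ℝ => g (x + r • y)) := by
      funext r; exact (hder r).deriv.symm
    rw [this]; exact measurable_deriv _
  have h1 : ‖g (x + y) - g x‖ₑ ≤ ∫⁻ r in Ioc (0 : ℝ) 1, ‖fderiv ℝ g (x + r • y) y‖ₑ := by
    by_cases hfin : ∫⁻ r in Ioc (0 : ℝ) 1, ‖fderiv ℝ g (x + r • y) y‖ₑ = ⊤
    · rw [hfin]; exact le_top
    · have hi : IntervalIntegrable (fun r : ℝ => fderiv ℝ g (x + r • y) y) volume 0 1 := by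
        rw [intervalIntegrable_iff_integrableOn_Ioc_of_le zero_le_one]
        exact ⟨hdm.aestronglyMeasurable, lt_top_iff_ne_top.2 hfin⟩
      have := intervalIntegral.integral_eq_sub_of_hasDerivAt (fun r _ => hder r) hi
      simp only [one_smul, zero_smul, add_zero] at this
      rw [← this, intervalIntegral.integral_of_le zero_le_one]
      exact enorm_integral_le_lintegral_enorm _
  have h2 : ∫⁻ r in Ioc (0 : ℝ) 1, ‖fderiv ℝ g (x + r • y) y‖ₑ
      ≤ ‖y‖ₑ * ∫⁻ r in Ioc (0 : ℝ) 1, ‖fderiv ℝ g (x + r • y)‖ₑ := by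
    rw [← lintegral_const_mul _ hm]
    refine lintegral_mono fun r => ?_
    rw [mul_comm]
    exact ContinuousLinearMap.le_opENorm _ _
  have h3 : (∫⁻ r in Ioc (0 : ℝ) 1, ‖fderiv ℝ g (x + r • y)‖ₑ) ^ p
      ≤ ∫⁻ r in Ioc (0 : ℝ) 1, ‖fderiv ℝ g (x + r • y)‖ₑ ^ p := by
    have : IsProbabilityMeasure (volume.restrict (Ioc (0 : ℝ) 1)) := ⟨by simp⟩
    have := eLpNorm'_le_eLpNorm'_of_exponent_le (μ := volume.restrict (Ioc (0 : ℝ) 1))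
      (f := fun r : ℝ => ‖fderiv ℝ g (x + r • y)‖ₑ) one_pos hp.le
      hm.aestronglyMeasurable
    simp only [eLpNorm', enorm_eq_self, ENNReal.rpow_one, div_one] at this
    have h4 := ENNReal.rpow_le_rpow this (by linarith : 0 ≤ p)
    rwa [← ENNReal.rpow_mul, one_div_mul_cancel (by linarith), ENNReal.rpow_one] at h4
  calc _ ≤ (‖y‖ₑ * ∫⁻ r in Ioc (0 : ℝ) 1, ‖fderiv ℝ g (x + r • y)‖ₑ) ^ p :=
        ENNReal.rpow_le_rpow (h1.trans h2) (by linarith)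
    _ = ‖y‖ₑ ^ p * (∫⁻ r in Ioc (0 : ℝ) 1, ‖fderiv ℝ g (x + r • y)‖ₑ) ^ p :=
        ENNReal.mul_rpow_of_nonneg _ _ (by linarith)
    _ ≤ _ := by gcongr

lemma translate_bound (d : ℕ) (g : Ed d → ℝ) (hg : Differentiable ℝ g) (y : Ed d) {p : ℝ}
    (hp : 1 < p) :
    ∫⁻ x, ‖g (x + y) - g x‖ₑ ^ p ≤
      ‖y‖ₑ ^ p * (eLpNorm (fun x => fderiv ℝ g x) (ENNReal.ofReal p) volume) ^ p := by
  have hm : Measurable (fun z : Ed d × ℝ => ‖fderiv ℝ g (z.1 + z.2 • y)‖ₑ ^ p) :=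
    (((measurable_fderiv ℝ g).comp
      (by fun_prop : Continuous fun z : Ed d × ℝ => z.1 + z.2 • y).measurable).enorm).pow_const _
  have hN : (eLpNorm (fun x => fderiv ℝ g x) (ENNReal.ofReal p) volume) ^ p
      = ∫⁻ x, ‖fderiv ℝ g x‖ₑ ^ p := by
    rw [eLpNorm_eq_lintegral_rpow_enorm_toReal (by simp; linarith) (by simp),
      ENNReal.toReal_ofReal (by linarith), ← ENNReal.rpow_mul, one_div_mul_cancel (by linarith),
      ENNReal.rpow_one]
  calc _ ≤ ∫⁻ x, ‖y‖ₑ ^ p * ∫⁻ r in Ioc (0 : ℝ) 1, ‖fderiv ℝ g (x + r • y)‖ₑ ^ p :=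
        lintegral_mono fun x => segment_bound g hg x y hp
    _ = ‖y‖ₑ ^ p * ∫⁻ x, ∫⁻ r in Ioc (0 : ℝ) 1, ‖fderiv ℝ g (x + r • y)‖ₑ ^ p :=
        lintegral_const_mul _ hm.lintegral_prod_right'
    _ = ‖y‖ₑ ^ p * ∫⁻ r in Ioc (0 : ℝ) 1, ∫⁻ x, ‖fderiv ℝ g (x + r • y)‖ₑ ^ p := by
        rw [lintegral_lintegral_swap hm.aemeasurable]
    _ = ‖y‖ₑ ^ p * ∫⁻ r in Ioc (0 : ℝ) 1, ∫⁻ x, ‖fderiv ℝ g x‖ₑ ^ p := by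
        congr 2
        funext r
        exact lintegral_add_right_eq_self (fun x => ‖fderiv ℝ g x‖ₑ ^ p) (r • y)
    _ = _ := by rw [hN]; simp

/-- Estimate of the translated-in-time difference of the Poisson integral:
`∫∫ |u(x+y,|y|) − u(x,|y|)|^p / |y|^{d+sp} dx dy ≤ C ∫_0^∞ ‖∇_x u(·,t)‖_{L^p}^p / t^{sp−p+1} dt`
with `C = C(d) > 0`. -/
theorem poisson_integral_translate_estimate (d : ℕ) :
    ∃ C : ℝ, 0 < C ∧
      ∀ (s p : ℝ), s ∈ Set.Ioo (0 : ℝ) 1 → 1 < p →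
        ∀ f : Ed d → ℝ, MemLp f (ENNReal.ofReal p) volume →
          (∫⁻ y : Ed d, ∫⁻ x : Ed d,
              ENNReal.ofReal
                (|poissonIntS d f (x + y) ‖y‖ - poissonIntS d f x ‖y‖| ^ p /
                  ‖y‖ ^ ((d : ℝ) + s * p))) ≤
            ENNReal.ofReal C *
              ∫⁻ t in Set.Ioi (0 : ℝ),
                (eLpNorm (fun x => fderiv ℝ (fun z => poissonIntS d f z t) x)
                    (ENNReal.ofReal p) volume) ^ p *
                  ENNReal.ofReal (1 / t ^ (s * p - p + 1)) := by
  refine ⟨((d : ℝ≥0∞) * volume (Metric.ball (0 : Ed d) 1)).toReal + 1, by positivity, ?_⟩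
  intro s p hs hp f hf
  have hp0 : 0 < p := by linarith
  have hcfin : (d : ℝ≥0∞) * volume (Metric.ball (0 : Ed d) 1) ≠ ⊤ :=
    ENNReal.mul_ne_top (by simp) measure_ball_lt_top.ne
  set N : ℝ → ℝ≥0∞ := fun t => (eLpNorm (fun x => fderiv ℝ (fun z => poissonIntS d f z t) x)
                    (ENNReal.ofReal p) volume) ^ p with hN
  have hzero : ∀ x : Ed d, ENNReal.ofReal
      (|poissonIntS d f (x + 0) ‖(0 : Ed d)‖ - poissonIntS d f x ‖(0 : Ed d)‖| ^ p /
        ‖(0 : Ed d)‖ ^ ((d : ℝ) + s * p)) = 0 := by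
    intro x
    simp [Real.zero_rpow hp0.ne']
  rcases Nat.eq_zero_or_pos d with hd | hd
  · subst hd
    refine le_trans (le_of_eq ?_) zero_le
    rw [lintegral_eq_zero_iff' (by
      have : (fun y : Ed 0 => ∫⁻ x : Ed 0, ENNReal.ofReal
        (|poissonIntS 0 f (x + y) ‖y‖ - poissonIntS 0 f x ‖y‖| ^ p /
          ‖y‖ ^ (((0 : ℕ) : ℝ) + s * p))) = fun _ => 0 := by
        funext y
        rw [Subsingleton.elim y 0]
        simp only [hzero, lintegral_zero]
      rw [this]; exact aemeasurable_const)]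
    refine Eventually.of_forall fun y => ?_
    rw [Subsingleton.elim y 0]
    simp only [hzero, lintegral_zero, Pi.zero_apply]
  have key : ∀ y : Ed d, (∫⁻ x : Ed d, ENNReal.ofReal
      (|poissonIntS d f (x + y) ‖y‖ - poissonIntS d f x ‖y‖| ^ p /
        ‖y‖ ^ ((d : ℝ) + s * p))) ≤
      (fun t : ℝ => N t * ENNReal.ofReal (t ^ p / t ^ ((d : ℝ) + s * p))) ‖y‖ := by
    intro y
    by_cases hy : y = 0
    · subst hy
      simp only [hzero, lintegral_zero]
      exact zero_le
    have hy0 : 0 < ‖y‖ := norm_pos_iff.2 hy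
    have hb := translate_bound d _ (poisson_differentiable d hy0 hp f hf) y hp
    have hrw : ∀ x : Ed d, ENNReal.ofReal
      (|poissonIntS d f (x + y) ‖y‖ - poissonIntS d f x ‖y‖| ^ p /
        ‖y‖ ^ ((d : ℝ) + s * p)) = ENNReal.ofReal ((‖y‖ ^ ((d : ℝ) + s * p))⁻¹) *
        ‖poissonIntS d f (x + y) ‖y‖ - poissonIntS d f x ‖y‖‖ₑ ^ p := by
      intro x
      rw [div_eq_mul_inv, mul_comm, ENNReal.ofReal_mul (by positivity),
        ← ENNReal.ofReal_rpow_of_nonneg (abs_nonneg _) hp0.le, Real.enorm_eq_ofReal_abs]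
    simp only [hrw]
    rw [lintegral_const_mul' _ _ ENNReal.ofReal_ne_top]
    calc _ ≤ ENNReal.ofReal ((‖y‖ ^ ((d : ℝ) + s * p))⁻¹) * (‖y‖ₑ ^ p * N ‖y‖) := by gcongr
      _ = _ := by
        rw [div_eq_mul_inv, ENNReal.ofReal_mul (by positivity),
          ← ENNReal.ofReal_rpow_of_nonneg (norm_nonneg _) hp0.le, ofReal_norm]
        ring
  refine (lintegral_mono key).trans ((polar_le d hd (fun t : ℝ =>
    N t * ENNReal.ofReal (t ^ p / t ^ ((d : ℝ) + s * p)))).trans ?_)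
  gcongr ?_ * ?_
  · rw [← ENNReal.ofReal_toReal hcfin]
    simp only [ENNReal.toReal_ofReal ENNReal.toReal_nonneg]
    exact ENNReal.ofReal_le_ofReal (by linarith)
  · refine le_of_eq (setLIntegral_congr_fun measurableSet_Ioi fun t ht => ?_)
    have ht : 0 < t := ht
    rw [mul_left_comm, ← ENNReal.ofReal_mul (by positivity)]
    congr 2
    rw [← Real.rpow_natCast, Nat.cast_sub hd, ← Real.rpow_sub ht, ← Real.rpow_add ht, one_div,
      ← Real.rpow_neg ht.le]
    congr 1
    push_cast
    ring
end
end

section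
/- Let s ∈ (0,1), 1 < p < ∞, and f ∈ L^p(ℝ^d) be a scalar function with Poisson integral u(x,t) = (p_t ∗ f)(x). Then there exists a constant C = C(d,p) > 0 such that ∫_{ℝ^d} ‖f − u(·, |y|)‖_{L^p(ℝ^d)}^p / |y|^{d+sp} dy ≤ (C / s^p) ∫_0^∞ ‖∂_t u(·,t)‖_{L^p(ℝ^d)}^p / t^{sp−p+1} dt. -/
open MeasureTheory Filter Set
open scoped ENNReal NNReal Topology

noncomputable section

lemma aux_two_div (d : ℕ) : 2 / sphereVol d =
    Real.Gamma (((d : ℝ) + 1) / 2) / (Real.pi ^ ((d : ℝ) / 2) * Real.sqrt Real.pi) := by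
  have hG : 0 < Real.Gamma (((d : ℝ) + 1) / 2) := Real.Gamma_pos_of_pos (by positivity)
  have hpi := Real.pi_pos
  unfold sphereVol
  rw [EuclideanSpace.volume_ball]
  simp only [ENNReal.ofReal_one, one_pow, one_mul, Fintype.card_fin]
  rw [ENNReal.toReal_ofReal (by positivity)]
  push_cast
  rw [Real.Gamma_add_one (by positivity), pow_succ]
  have : Real.sqrt Real.pi ^ d = Real.pi ^ ((d : ℝ) / 2) := by
    rw [Real.sqrt_eq_rpow, ← Real.rpow_natCast, ← Real.rpow_mul hpi.le]; congr 1; ring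
  rw [this]
  have : 0 < Real.pi ^ ((d : ℝ) / 2) := by positivity
  field_simp

lemma aux_c_pos (d : ℕ) : 0 < 2 / sphereVol d := by
  have hG : 0 < Real.Gamma (((d : ℝ) + 1) / 2) := Real.Gamma_pos_of_pos (by positivity)
  have hpi := Real.pi_pos
  rw [aux_two_div]; positivity

lemma K_nonneg (d : ℕ) {t : ℝ} (ht : 0 ≤ t) (y : Ed d) : 0 ≤ poissonKernelEd d t y := by
  have := aux_c_pos d
  unfold poissonKernelEd; positivity

lemma K_meas (d : ℕ) : Measurable (fun q : ℝ × Ed d => poissonKernelEd d q.1 q.2) := by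
  unfold poissonKernelEd; fun_prop

lemma aux_lint (a r : ℝ) (ha : 0 < a) (hr : 0 < r) :
    ∫⁻ l in Ioi (0:ℝ), ENNReal.ofReal (l ^ (a - 1) * Real.exp (-(r * l))) =
      ENNReal.ofReal ((1 / r) ^ a * Real.Gamma a) := by
  rw [← Real.integral_rpow_mul_exp_neg_mul_Ioi ha hr, ofReal_integral_eq_lintegral_ofReal]
  · by_contra h
    have h1 := Real.integral_rpow_mul_exp_neg_mul_Ioi ha hr
    rw [integral_undef h] at h1
    have := Real.Gamma_pos_of_pos ha
    have : 0 < (1 / r) ^ a * Real.Gamma a := by positivity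
    linarith
  · filter_upwards [ae_restrict_mem measurableSet_Ioi] with l hl
    have : (0:ℝ) < l := hl
    positivity

lemma aux_gauss (d : ℕ) (b : ℝ) (hb : 0 < b) :
    ∫⁻ y : Ed d, ENNReal.ofReal (Real.exp (-b * ‖y‖ ^ 2)) =
      ENNReal.ofReal ((Real.pi / b) ^ ((d : ℝ) / 2)) := by
  have h1 := GaussianFourier.integral_rexp_neg_mul_sq_norm (V := Ed d) hb
  rw [finrank_euclideanSpace_fin] at h1
  rw [← h1, ofReal_integral_eq_lintegral_ofReal]
  · by_contra h
    rw [integral_undef h] at h1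
    have hpi := Real.pi_pos
    have : 0 < (Real.pi / b) ^ ((d : ℝ) / 2) := by positivity
    linarith
  · filter_upwards with y
    positivity

lemma lintegral_K (d : ℕ) {t : ℝ} (ht : 0 < t) :
    ∫⁻ y : Ed d, ENNReal.ofReal (poissonKernelEd d t y) = 1 := by
  have hpi := Real.pi_pos
  set a : ℝ := ((d : ℝ) + 1) / 2 with ha
  have ha0 : 0 < a := by positivity
  have hG : 0 < Real.Gamma a := Real.Gamma_pos_of_pos ha0
  have hc := aux_c_pos d
  have e1 : ∀ y : Ed d, ENNReal.ofReal (poissonKernelEd d t y) =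
      ENNReal.ofReal ((2 / sphereVol d) * t / Real.Gamma a) *
      ∫⁻ l in Ioi (0:ℝ), ENNReal.ofReal (l ^ (a - 1) * Real.exp (-((‖y‖^2 + t^2) * l))) := by
    intro y
    have hD : 0 < ‖y‖^2 + t^2 := by positivity
    rw [aux_lint a _ ha0 hD, ← ENNReal.ofReal_mul (by positivity)]
    congr 1
    unfold poissonKernelEd
    rw [← ha, Real.div_rpow zero_le_one hD.le, Real.one_rpow]
    field_simp
  simp_rw [e1]
  rw [lintegral_const_mul' _ _ ENNReal.ofReal_ne_top, lintegral_lintegral_swap]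
  · have e2 : ∀ l ∈ Ioi (0:ℝ), ∫⁻ y : Ed d,
        ENNReal.ofReal (l ^ (a - 1) * Real.exp (-((‖y‖^2 + t^2) * l))) =
        ENNReal.ofReal (Real.pi ^ ((d:ℝ)/2)) *
          ENNReal.ofReal (l ^ ((1/2 : ℝ) - 1) * Real.exp (-((t^2) * l))) := by
      intro l hl
      have hl0 : (0:ℝ) < l := hl
      have : ∀ y : Ed d, ENNReal.ofReal (l ^ (a - 1) * Real.exp (-((‖y‖^2 + t^2) * l))) =
          ENNReal.ofReal (l ^ (a - 1) * Real.exp (-(t^2 * l))) *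
            ENNReal.ofReal (Real.exp (-l * ‖y‖ ^ 2)) := by
        intro y
        rw [← ENNReal.ofReal_mul (by positivity), mul_assoc, ← Real.exp_add]
        congr 3; ring
      simp_rw [this]
      rw [lintegral_const_mul' _ _ ENNReal.ofReal_ne_top, aux_gauss d l hl0,
        ← ENNReal.ofReal_mul (by positivity), ← ENNReal.ofReal_mul (by positivity)]
      congr 1
      rw [Real.div_rpow hpi.le hl0.le]
      have : l ^ (a - 1) = l ^ ((1/2 : ℝ) - 1) * l ^ ((d:ℝ)/2) := by
        rw [← Real.rpow_add hl0]; congr 1; rw [ha]; ring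
      rw [this]
      field_simp
    rw [setLIntegral_congr_fun measurableSet_Ioi e2,
      lintegral_const_mul' _ _ ENNReal.ofReal_ne_top,
      aux_lint _ _ (by norm_num) (by positivity), ← ENNReal.ofReal_mul (by positivity),
      ← ENNReal.ofReal_mul (by positivity), ← ENNReal.ofReal_one]
    congr 1
    rw [Real.Gamma_one_half_eq, aux_two_div, ← ha, ← Real.sqrt_eq_rpow, Real.sqrt_div zero_le_one,
      Real.sqrt_sq ht.le, Real.sqrt_one]
    field_simp
  · apply Measurable.aemeasurable
    fun_prop

lemma integrable_K (d : ℕ) {t : ℝ} (ht : 0 < t) : Integrable (poissonKernelEd d t) := by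
  refine ⟨((K_meas d).comp (measurable_prodMk_left (x := t))).aestronglyMeasurable, ?_⟩
  rw [hasFiniteIntegral_iff_ofReal (Eventually.of_forall (K_nonneg d ht.le)), lintegral_K d ht]
  exact ENNReal.one_lt_top

lemma integral_K (d : ℕ) {t : ℝ} (ht : 0 < t) : ∫ y, poissonKernelEd d t y = 1 := by
  rw [integral_eq_lintegral_of_nonneg_ae (Eventually.of_forall (K_nonneg d ht.le))
    (integrable_K d ht).1, lintegral_K d ht]
  simp

/-- time derivative of the Poisson kernel -/
def KD (d : ℕ) (t : ℝ) (y : Ed d) : ℝ :=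
  (2 / sphereVol d) * ((‖y‖ ^ 2 + t ^ 2) ^ (-(((d : ℝ) + 1) / 2)) +
    t * (2 * t * (-(((d : ℝ) + 1) / 2)) * (‖y‖ ^ 2 + t ^ 2) ^ (-(((d : ℝ) + 1) / 2) - 1)))

lemma K_eq (d : ℕ) (t : ℝ) (y : Ed d) : poissonKernelEd d t y =
    (2 / sphereVol d) * (t * (‖y‖ ^ 2 + t ^ 2) ^ (-(((d : ℝ) + 1) / 2))) := by
  unfold poissonKernelEd
  rw [Real.rpow_neg (by positivity)]; ring

lemma KD_meas (d : ℕ) : Measurable (fun q : ℝ × Ed d => KD d q.1 q.2) := by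
  unfold KD; fun_prop

lemma hasDerivAt_K (d : ℕ) {t : ℝ} (ht : 0 < t) (y : Ed d) :
    HasDerivAt (fun τ => poissonKernelEd d τ y) (KD d t y) t := by
  have hD : ‖y‖ ^ 2 + t ^ 2 ≠ 0 := by positivity
  have h1 : HasDerivAt (fun τ : ℝ => ‖y‖ ^ 2 + τ ^ 2) (2 * t) t := by
    simpa using (hasDerivAt_pow 2 t).const_add (‖y‖ ^ 2)
  have h2 := h1.rpow_const (p := -(((d : ℝ) + 1) / 2)) (Or.inl hD)
  have h3 := ((hasDerivAt_id t).mul h2).const_mul (2 / sphereVol d)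
  simp only [K_eq]
  refine h3.congr_deriv ?_
  unfold KD
  simp

lemma KD_bound (d : ℕ) {b t : ℝ} (hb : 0 < b) (hbt : b ≤ t) (y : Ed d) :
    |KD d t y| ≤ ((d : ℝ) + 2) / b * poissonKernelEd d b y := by
  have hc := aux_c_pos d
  have ht : 0 < t := hb.trans_le hbt
  have hD : 0 < ‖y‖ ^ 2 + t ^ 2 := by positivity
  have hD' : 0 < ‖y‖ ^ 2 + b ^ 2 := by positivity
  set a : ℝ := ((d : ℝ) + 1) / 2 with ha
  have ha0 : 0 < a := by positivity
  set D := ‖y‖ ^ 2 + t ^ 2 with hDd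
  have h1 : D ^ (-a) ≤ (‖y‖ ^ 2 + b ^ 2) ^ (-a) := by
    apply Real.rpow_le_rpow_of_nonpos hD' _ (by linarith)
    rw [hDd]; gcongr
  have h2 : D ^ (-a - 1) = D ^ (-a) / D := by rw [Real.rpow_sub_one hD.ne']
  have h3 : KD d t y = (2 / sphereVol d) * D ^ (-a) * (1 - 2 * a * (t ^ 2 / D)) := by
    unfold KD; rw [← ha, ← hDd, h2]; ring
  have h4 : t ^ 2 / D ≤ 1 := by rw [div_le_one hD, hDd]; nlinarith [sq_nonneg ‖y‖]
  have h4' : 0 ≤ t ^ 2 / D := by positivity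
  have h5 : |1 - 2 * a * (t ^ 2 / D)| ≤ (d : ℝ) + 2 := by
    have : 2 * a = d + 1 := by rw [ha]; ring
    rw [this, abs_le]
    constructor <;> nlinarith [mul_le_mul_of_nonneg_left h4 (by positivity : (0:ℝ) ≤ d + 1),
      mul_nonneg (by positivity : (0:ℝ) ≤ d + 1) h4']
  rw [h3, abs_mul, abs_of_nonneg (by positivity), K_eq, ← ha]
  calc _ ≤ (2 / sphereVol d) * (‖y‖ ^ 2 + b ^ 2) ^ (-a) * ((d : ℝ) + 2) := by gcongr
    _ = _ := by field_simp

lemma K_bdd (d : ℕ) {t : ℝ} (ht : 0 < t) (y : Ed d) :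
    poissonKernelEd d t y ≤ (2 / sphereVol d) * (t * (t ^ 2) ^ (-(((d : ℝ) + 1) / 2))) := by
  have hc := aux_c_pos d
  rw [K_eq]
  have : (‖y‖ ^ 2 + t ^ 2) ^ (-(((d : ℝ) + 1) / 2)) ≤ (t ^ 2) ^ (-(((d : ℝ) + 1) / 2)) := by
    apply Real.rpow_le_rpow_of_nonpos (by positivity) (by nlinarith [sq_nonneg ‖y‖])
    have : (0:ℝ) ≤ ((d : ℝ) + 1) / 2 := by positivity
    linarith
  gcongr

lemma le_one_add_rpow {p : ℝ} (hp : 1 < p) {a : ℝ} (ha : 0 ≤ a) : a ≤ 1 + a ^ p := by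
  rcases le_total a 1 with h | h
  · have : 0 ≤ a ^ p := by positivity
    linarith
  · have : a ^ (1:ℝ) ≤ a ^ p := Real.rpow_le_rpow_of_exponent_le h hp.le
    rw [Real.rpow_one] at this; linarith

lemma integrable_Kf (d : ℕ) {p : ℝ} (hp : 1 < p) {f : Ed d → ℝ} (hfm : Measurable f)
    (hf : MemLp f (ENNReal.ofReal p) volume) {t : ℝ} (ht : 0 < t) (x : Ed d) :
    Integrable (fun y => poissonKernelEd d t y * f (x - y)) := by
  have hp0 : 0 < p := by linarith
  have h1 : Integrable (fun y => ‖f y‖ ^ p) := by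
    have := hf.integrable_norm_rpow (by simp [hp0]) (by simp)
    rwa [ENNReal.toReal_ofReal hp0.le] at this
  have h2 : Integrable (fun y => ‖f (x - y)‖ ^ p) := h1.comp_sub_left x
  set M := (2 / sphereVol d) * (t * (t ^ 2) ^ (-(((d : ℝ) + 1) / 2)))
  have h3 := (integrable_K d ht).add (h2.const_mul M)
  refine h3.mono' ?_ (Eventually.of_forall fun y => ?_)
  · exact (((K_meas d).comp (measurable_prodMk_left (x := t))).mul
      (hfm.comp (measurable_const.sub measurable_id))).aestronglyMeasurable
  · have hk := K_nonneg d ht.le y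
    rw [norm_mul, Real.norm_of_nonneg hk]
    have := le_one_add_rpow hp (norm_nonneg (f (x - y)))
    have hb := K_bdd d ht y
    calc _ ≤ poissonKernelEd d t y * (1 + ‖f (x - y)‖ ^ p) := by gcongr
      _ = poissonKernelEd d t y + poissonKernelEd d t y * ‖f (x - y)‖ ^ p := by ring
      _ ≤ poissonKernelEd d t y + M * ‖f (x - y)‖ ^ p := by gcongr

lemma hasDerivAt_u (d : ℕ) {p : ℝ} (hp : 1 < p) {f : Ed d → ℝ} (hfm : Measurable f)
    (hf : MemLp f (ENNReal.ofReal p) volume) {t : ℝ} (ht : 0 < t) (x : Ed d) :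
    HasDerivAt (fun τ => poissonIntS d f x τ) (∫ y, KD d t y * f (x - y)) t := by
  have hfx : Measurable (fun y => f (x - y)) := hfm.comp (measurable_const.sub measurable_id)
  refine (hasDerivAt_integral_of_dominated_loc_of_deriv_le (s := Ioi (t / 2))
    (bound := fun y => ((d : ℝ) + 2) / (t / 2) * ‖poissonKernelEd d (t / 2) y * f (x - y)‖)
    (F := fun τ y => poissonKernelEd d τ y * f (x - y))
    (F' := fun τ y => KD d τ y * f (x - y)) (Ioi_mem_nhds (by linarith)) ?_
    (integrable_Kf d hp hfm hf ht x) ?_ ?_ ?_ ?_).2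
  · exact Eventually.of_forall fun τ => (((K_meas d).comp
      (measurable_prodMk_left (x := τ))).mul hfx).aestronglyMeasurable
  · exact (((KD_meas d).comp (measurable_prodMk_left (x := t))).mul hfx).aestronglyMeasurable
  · refine Eventually.of_forall fun y τ hτ => ?_
    have hτ' : t / 2 ≤ τ := le_of_lt hτ
    rw [norm_mul, norm_mul, ← mul_assoc, Real.norm_of_nonneg (K_nonneg d (by linarith) y)]
    gcongr
    exact KD_bound d (by linarith) hτ' y
  · have hi := integrable_Kf d hp hfm hf (half_pos ht) x
    exact Integrable.const_mul hi.norm _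
  · refine Eventually.of_forall fun y τ hτ => ?_
    have hτ' : t / 2 < τ := hτ
    exact (hasDerivAt_K d (by linarith) y).mul_const _

lemma meas_u (d : ℕ) {f : Ed d → ℝ} (hfm : Measurable f) :
    Measurable (fun q : Ed d × ℝ => poissonIntS d f q.1 q.2) := by
  unfold poissonIntS
  refine (StronglyMeasurable.integral_prod_right
    (f := fun (q : Ed d × ℝ) y => poissonKernelEd d q.2 y * f (q.1 - y)) ?_).measurable
  apply Measurable.stronglyMeasurable
  have h1 : Measurable (fun z : (Ed d × ℝ) × Ed d => poissonKernelEd d z.1.2 z.2) :=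
    Measurable.comp (g := fun q : ℝ × Ed d => poissonKernelEd d q.1 q.2) (K_meas d)
      (by fun_prop : Measurable (fun z : (Ed d × ℝ) × Ed d => (z.1.2, z.2)))
  have h2 : Measurable (fun z : (Ed d × ℝ) × Ed d => f (z.1.1 - z.2)) :=
    hfm.comp (by fun_prop)
  exact h1.mul h2

lemma meas_ud (d : ℕ) {f : Ed d → ℝ} (hfm : Measurable f) :
    Measurable (fun q : Ed d × ℝ => ∫ y, KD d q.2 y * f (q.1 - y)) := by
  refine (StronglyMeasurable.integral_prod_right
    (f := fun (q : Ed d × ℝ) y => KD d q.2 y * f (q.1 - y)) ?_).measurable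
  apply Measurable.stronglyMeasurable
  have h1 : Measurable (fun z : (Ed d × ℝ) × Ed d => KD d z.1.2 z.2) := by
    unfold KD; fun_prop
  have h2 : Measurable (fun z : (Ed d × ℝ) × Ed d => f (z.1.1 - z.2)) :=
    hfm.comp (by fun_prop)
  exact h1.mul h2

lemma eLpNorm_pow {α : Type*} [MeasurableSpace α] {μ : Measure α} {p : ℝ} (hp : 1 < p)
    (g : α → ℝ) : (eLpNorm g (ENNReal.ofReal p) μ) ^ p = ∫⁻ x, ‖g x‖ₑ ^ p ∂μ := by
  have hp0 : 0 < p := by linarith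
  rw [eLpNorm_eq_lintegral_rpow_enorm_toReal (by simp [hp0]) (by simp),
    ENNReal.toReal_ofReal hp0.le, ← ENNReal.rpow_mul, one_div_mul_cancel hp0.ne', ENNReal.rpow_one]

lemma jensen {α : Type*} [MeasurableSpace α] {μ : Measure α} {p : ℝ} (hp : 1 < p)
    {k h : α → ℝ≥0∞} (hk : Measurable k) (hh : Measurable h) (hk1 : ∫⁻ x, k x ∂μ = 1) :
    (∫⁻ x, k x * h x ∂μ) ^ p ≤ ∫⁻ x, k x * h x ^ p ∂μ := by
  have hp0 : 0 < p := by linarith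
  set q : ℝ := p.conjExponent with hq
  have hpq : p.HolderConjugate q := Real.HolderConjugate.conjExponent hp
  have hq0 : 0 < q := hpq.symm.pos
  have h2 := ENNReal.lintegral_mul_le_Lp_mul_Lq μ hpq
      (f := fun x => k x ^ (1 / p) * h x) (g := fun x => k x ^ (1 / q))
      (by fun_prop) (by fun_prop)
  have e1 : ∀ x, ((fun x => k x ^ (1 / p) * h x) * (fun x => k x ^ (1 / q))) x = k x * h x := by
    intro x
    simp only [Pi.mul_apply]
    rw [mul_right_comm, ← ENNReal.rpow_add_of_nonneg _ _ (by positivity) (by positivity)]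
    have : 1 / p + 1 / q = 1 := by simpa using hpq.inv_add_inv_eq_one
    rw [this, ENNReal.rpow_one]
  have e2 : ∀ x, (k x ^ (1 / p) * h x) ^ p = k x * h x ^ p := by
    intro x
    rw [ENNReal.mul_rpow_of_nonneg _ _ hp0.le, ← ENNReal.rpow_mul, one_div_mul_cancel hp0.ne',
      ENNReal.rpow_one]
  have e3 : ∀ x, (k x ^ (1 / q)) ^ q = k x := by
    intro x
    rw [← ENNReal.rpow_mul, one_div_mul_cancel hq0.ne', ENNReal.rpow_one]
  simp_rw [e1, e2, e3, hk1, ENNReal.one_rpow, mul_one] at h2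
  calc _ ≤ _ := ENNReal.rpow_le_rpow h2 hp0.le
    _ = _ := by rw [← ENNReal.rpow_mul, one_div_mul_cancel hp0.ne', ENNReal.rpow_one]

lemma trans_tendsto (d : ℕ) {p : ℝ} (hp : 1 < p) {f : Ed d → ℝ}
    (hf : MemLp f (ENNReal.ofReal p) volume) :
    Tendsto (fun y => eLpNorm (fun x => f (x - y) - f x) (ENNReal.ofReal p) volume)
      (𝓝 0) (𝓝 0) := by
  have i1 : Fact (1 ≤ ENNReal.ofReal p) := ⟨by simpa using hp.le⟩
  have i2 : Fact (ENNReal.ofReal p ≠ ∞) := ⟨ENNReal.ofReal_ne_top⟩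
  have hc : Continuous (fun y : Ed d =>
      edist ((DomAddAct.mk (-y)) +ᵥ hf.toLp f) (hf.toLp f)) := by
    refine Continuous.edist ?_ continuous_const
    exact (DomAddAct.continuous_mk.comp continuous_neg).vadd continuous_const
  have h := hc.tendsto 0
  have e : ∀ y : Ed d, edist ((DomAddAct.mk (-y)) +ᵥ hf.toLp f) (hf.toLp f) =
      eLpNorm (fun x => f (x - y) - f x) (ENNReal.ofReal p) volume := by
    intro y
    rw [DomAddAct.mk_vadd_toLp, Lp.edist_toLp_toLp]
    congr 1
    ext x
    simp [sub_eq_neg_add]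
  simp_rw [e] at h
  simpa using h

lemma Lp_est (d : ℕ) {p : ℝ} (hp : 1 < p) {f : Ed d → ℝ} (hfm : Measurable f)
    (hf : MemLp f (ENNReal.ofReal p) volume) {t : ℝ} (ht : 0 < t) :
    (eLpNorm (fun x => poissonIntS d f x t - f x) (ENNReal.ofReal p) volume) ^ p ≤
      ∫⁻ y, ENNReal.ofReal (poissonKernelEd d t y) *
        (eLpNorm (fun x => f (x - y) - f x) (ENNReal.ofReal p) volume) ^ p := by
  have hK : Measurable (poissonKernelEd d t) := (K_meas d).comp (measurable_prodMk_left (x := t))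
  simp_rw [eLpNorm_pow hp]
  have h1 : ∀ x, ‖poissonIntS d f x t - f x‖ₑ ^ p ≤
      ∫⁻ y, ENNReal.ofReal (poissonKernelEd d t y) * ‖f (x - y) - f x‖ₑ ^ p := by
    intro x
    have e : poissonIntS d f x t - f x = ∫ y, poissonKernelEd d t y * (f (x - y) - f x) := by
      simp_rw [mul_sub]
      rw [integral_sub (integrable_Kf d hp hfm hf ht x) ((integrable_K d ht).mul_const _),
        integral_mul_const, integral_K d ht, one_mul]
      rfl
    have h2 : ‖poissonIntS d f x t - f x‖ₑ ≤
        ∫⁻ y, ENNReal.ofReal (poissonKernelEd d t y) * ‖f (x - y) - f x‖ₑ := by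
      rw [e]
      refine (enorm_integral_le_lintegral_enorm _).trans (le_of_eq ?_)
      refine lintegral_congr fun y => ?_
      rw [enorm_mul, Real.enorm_of_nonneg (K_nonneg d ht.le y)]
    refine (ENNReal.rpow_le_rpow h2 (by linarith)).trans ?_
    refine jensen hp hK.ennreal_ofReal ?_ (lintegral_K d ht)
    exact ((hfm.comp (measurable_const.sub measurable_id)).sub measurable_const).enorm
  refine (lintegral_mono h1).trans (le_of_eq ?_)
  rw [lintegral_lintegral_swap]
  · refine lintegral_congr fun y => ?_
    rw [lintegral_const_mul' _ _ ENNReal.ofReal_ne_top]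
  · apply Measurable.aemeasurable
    have m1 : Measurable (fun z : Ed d × Ed d => f (z.1 - z.2)) :=
      hfm.comp (measurable_fst.sub measurable_snd)
    have m2 : Measurable (fun z : Ed d × Ed d => f z.1) := hfm.comp measurable_fst
    have m3 : Measurable (fun z : Ed d × Ed d => poissonKernelEd d t z.2) :=
      hK.comp measurable_snd
    exact m3.ennreal_ofReal.mul ((m1.sub m2).enorm.pow_const p)

lemma K_tail (d : ℕ) {t δ : ℝ} (ht : 0 < t) (hδ : 0 < δ) (y : Ed d) (hy : δ ≤ ‖y‖) :
    poissonKernelEd d t y ≤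
      t * (1 + 1 / δ ^ 2) ^ (((d : ℝ) + 1) / 2) * poissonKernelEd d 1 y := by
  have hc := aux_c_pos d
  have hy0 : 0 < ‖y‖ := hδ.trans_le hy
  unfold poissonKernelEd
  set a : ℝ := ((d : ℝ) + 1) / 2 with ha
  have ha0 : 0 < a := by positivity
  have h1 : ‖y‖ ^ 2 + 1 ^ 2 ≤ (1 + 1 / δ ^ 2) * (‖y‖ ^ 2 + t ^ 2) := by
    have : 1 ≤ 1 / δ ^ 2 * ‖y‖ ^ 2 := by
      rw [one_div_mul_eq_div, one_le_div (by positivity)]; gcongr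
    have h3 : 0 ≤ 1 / δ ^ 2 * t ^ 2 := by positivity
    nlinarith [sq_nonneg t]
  have h2 : (‖y‖ ^ 2 + 1 ^ 2) ^ a ≤ (1 + 1 / δ ^ 2) ^ a * (‖y‖ ^ 2 + t ^ 2) ^ a := by
    rw [← Real.mul_rpow (by positivity) (by positivity)]
    gcongr
  have p1 : 0 < (‖y‖ ^ 2 + 1 ^ 2) ^ a := by positivity
  have p2 : 0 < (‖y‖ ^ 2 + t ^ 2) ^ a := by positivity
  rw [mul_div_assoc', div_le_div_iff₀ p2 p1]
  have h4 := mul_le_mul_of_nonneg_left h2 (by positivity : 0 ≤ 2 / sphereVol d * t)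
  linarith

lemma Lp_tendsto (d : ℕ) {p : ℝ} (hp : 1 < p) {f : Ed d → ℝ} (hfm : Measurable f)
    (hf : MemLp f (ENNReal.ofReal p) volume) :
    Tendsto (fun t => eLpNorm (fun x => poissonIntS d f x t - f x) (ENNReal.ofReal p) volume)
      (𝓝[>] 0) (𝓝 0) := by
  have hp0 : 0 < p := by linarith
  set ω : Ed d → ℝ≥0∞ :=
    fun y => (eLpNorm (fun x => f (x - y) - f x) (ENNReal.ofReal p) volume) ^ p with hω
  have hω0 : Tendsto ω (𝓝 0) (𝓝 0) := by
    have := ((ENNReal.continuous_rpow_const (y := p)).tendsto 0).comp (trans_tendsto d hp hf)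
    simpa [hp0, Function.comp_def] using this
  obtain ⟨M, hM, hωM⟩ : ∃ M : ℝ≥0∞, M ≠ ∞ ∧ ∀ y, ω y ≤ M := by
    set A := eLpNorm f (ENNReal.ofReal p) volume
    have hA : A ≠ ∞ := hf.2.ne
    refine ⟨(A + A) ^ p, by simp [hA, hp0.le], fun y => ?_⟩
    refine ENNReal.rpow_le_rpow ?_ hp0.le
    have mp : MeasurePreserving (fun x : Ed d => x - y) volume volume :=
      measurePreserving_sub_right volume y
    have h1 : eLpNorm (fun x => f (x - y)) (ENNReal.ofReal p) volume = A :=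
      eLpNorm_comp_measurePreserving hf.1 mp
    have h2 := eLpNorm_sub_le (hf.comp_measurePreserving mp).1 hf.1
      (p := ENNReal.ofReal p) (by simpa using hp.le)
    refine h2.trans (le_of_eq ?_)
    rw [show eLpNorm (f ∘ fun x => x - y) (ENNReal.ofReal p) volume = A from h1]
  suffices h : Tendsto (fun t => (eLpNorm (fun x => poissonIntS d f x t - f x)
      (ENNReal.ofReal p) volume) ^ p) (𝓝[>] 0) (𝓝 0) by
    have := ((ENNReal.continuous_rpow_const (y := 1 / p)).tendsto 0).comp h
    simp only [Function.comp_def, ← ENNReal.rpow_mul, mul_one_div_cancel hp0.ne',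
      ENNReal.rpow_one] at this
    simpa [hp0] using this
  rw [ENNReal.tendsto_nhds_zero]
  intro ε hε
  have hε2 : 0 < ε / 2 := ENNReal.half_pos hε.ne'
  obtain ⟨δ, hδ, hball⟩ := Metric.eventually_nhds_iff.1 (ENNReal.tendsto_nhds_zero.1 hω0 _ hε2)
  set B : ℝ := (1 + 1 / δ ^ 2) ^ (((d : ℝ) + 1) / 2) with hB
  have hB0 : 0 < B := by positivity
  have htend : Tendsto (fun t : ℝ => ENNReal.ofReal (t * B) * M) (𝓝[>] 0) (𝓝 0) := by
    have h1 : Tendsto (fun t : ℝ => ENNReal.ofReal (t * B)) (𝓝[>] 0) (𝓝 0) := by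
      have : Continuous (fun t : ℝ => ENNReal.ofReal (t * B)) :=
        ENNReal.continuous_ofReal.comp (by fun_prop)
      have := (this.tendsto 0).mono_left (nhdsWithin_le_nhds (s := Ioi 0))
      simpa using this
    simpa using ENNReal.Tendsto.mul_const h1 (Or.inr hM)
  filter_upwards [ENNReal.tendsto_nhds_zero.1 htend _ hε2, self_mem_nhdsWithin] with t h1 ht
  have ht0 : (0:ℝ) < t := ht
  have hK : Measurable (poissonKernelEd d t) := (K_meas d).comp (measurable_prodMk_left (x := t))
  have hK1 : Measurable (poissonKernelEd d 1) :=
    (K_meas d).comp (measurable_prodMk_left (x := (1:ℝ)))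
  refine (Lp_est d hp hfm hf ht0).trans ?_
  have hpt : ∀ y, ENNReal.ofReal (poissonKernelEd d t y) * ω y ≤
      ENNReal.ofReal (poissonKernelEd d t y) * (ε / 2) +
        ENNReal.ofReal (poissonKernelEd d 1 y) * (ENNReal.ofReal (t * B) * M) := by
    intro y
    by_cases hy : ‖y‖ < δ
    · refine le_trans ?_ le_self_add
      gcongr
      exact hball (by simpa using hy)
    · refine le_trans ?_ le_add_self
      rw [← mul_assoc, ← ENNReal.ofReal_mul (K_nonneg d zero_le_one y)]
      gcongr
      · rw [mul_comm]; exact K_tail d ht0 hδ y (not_lt.1 hy)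
      · exact hωM y
  refine (lintegral_mono hpt).trans ?_
  rw [lintegral_add_left (by fun_prop), lintegral_mul_const _ (by fun_prop),
    lintegral_mul_const _ (by fun_prop), lintegral_K d ht0, lintegral_K d one_pos, one_mul, one_mul]
  calc _ ≤ ε / 2 + ε / 2 := by gcongr
    _ = ε := ENNReal.add_halves ε

lemma hardy {p s : ℝ} (hp : 1 < p) (hs : 0 < s) {g : ℝ → ℝ≥0∞}
    (hg : Measurable g) :
    ∫⁻ r in Ioi (0:ℝ), (∫⁻ t in Ioc 0 r, g t) ^ p * ENNReal.ofReal (1 / r ^ (1 + s * p)) ≤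
      ENNReal.ofReal (1 / s ^ p) *
        ∫⁻ t in Ioi (0:ℝ), g t ^ p * ENNReal.ofReal (1 / t ^ (s * p - p + 1)) := by
  have hp0 : 0 < p := by linarith
  set q : ℝ := p.conjExponent with hq
  have hpq : p.HolderConjugate q := Real.HolderConjugate.conjExponent hp
  have hq0 : 0 < q := hpq.symm.pos
  set a : ℝ := (1 - s) / q with ha
  have hpq1 : p / q = p - 1 := hpq.div_conj_eq_sub_one
  -- Hölder
  have H : ∀ r ∈ Ioi (0:ℝ), (∫⁻ t in Ioc 0 r, g t) ^ p ≤
      ENNReal.ofReal ((r ^ s / s) ^ (p - 1)) *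
        ∫⁻ t in Ioc 0 r, g t ^ p * ENNReal.ofReal (t ^ (a * p)) := by
    intro r hr
    have hr0 : (0:ℝ) < r := hr
    have h1 : ∫⁻ t in Ioc 0 r, g t = ∫⁻ t in Ioc 0 r,
        ((fun t => g t * ENNReal.ofReal (t ^ a)) * (fun t => ENNReal.ofReal (t ^ (-a)))) t := by
      refine setLIntegral_congr_fun measurableSet_Ioc fun t ht => ?_
      have ht0 : 0 < t := ht.1
      simp only [Pi.mul_apply]
      rw [mul_assoc, ← ENNReal.ofReal_mul (by positivity), ← Real.rpow_add ht0]
      simp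
    have h2 := ENNReal.lintegral_mul_le_Lp_mul_Lq (volume.restrict (Ioc 0 r)) hpq
      (f := fun t => g t * ENNReal.ofReal (t ^ a)) (g := fun t => ENNReal.ofReal (t ^ (-a)))
      (by fun_prop) (by fun_prop)
    rw [← h1] at h2
    have h3 : ∫⁻ t in Ioc 0 r, (ENNReal.ofReal (t ^ (-a))) ^ q = ENNReal.ofReal (r ^ s / s) := by
      have e : ∀ t ∈ Ioc 0 r, (ENNReal.ofReal (t ^ (-a))) ^ q = ENNReal.ofReal (t ^ (s - 1)) := by
        intro t ht
        have ht0 : 0 < t := ht.1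
        rw [ENNReal.ofReal_rpow_of_nonneg (by positivity) hq0.le, ← Real.rpow_mul ht0.le]
        congr 2
        rw [ha]; field_simp; ring
      rw [setLIntegral_congr_fun measurableSet_Ioc e, ← ofReal_integral_eq_lintegral_ofReal]
      · rw [← intervalIntegral.integral_of_le hr0.le, integral_rpow (Or.inl (by linarith))]
        simp [Real.zero_rpow hs.ne']
      · exact (intervalIntegrable_iff_integrableOn_Ioc_of_le hr0.le).1
          (intervalIntegral.intervalIntegrable_rpow' (by linarith))
      · filter_upwards [ae_restrict_mem measurableSet_Ioc] with t ht
        have ht0 : 0 < t := ht.1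
        positivity
    have h4 : ∫⁻ t in Ioc 0 r, (g t * ENNReal.ofReal (t ^ a)) ^ p =
        ∫⁻ t in Ioc 0 r, g t ^ p * ENNReal.ofReal (t ^ (a * p)) := by
      refine setLIntegral_congr_fun measurableSet_Ioc fun t ht => ?_
      have ht0 : 0 < t := ht.1
      rw [ENNReal.mul_rpow_of_nonneg _ _ hp0.le,
        ENNReal.ofReal_rpow_of_nonneg (by positivity) hp0.le, ← Real.rpow_mul ht0.le]
    rw [h3, h4] at h2
    calc _ ≤ _ := ENNReal.rpow_le_rpow h2 hp0.le
      _ = _ := by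
        rw [ENNReal.mul_rpow_of_nonneg _ _ hp0.le, ← ENNReal.rpow_mul, ← ENNReal.rpow_mul,
          one_div_mul_cancel hp0.ne', ENNReal.rpow_one, one_div_mul_eq_div, hpq1,
          ENNReal.ofReal_rpow_of_nonneg (by positivity) (by linarith), mul_comm]
  set G : ℝ → ℝ≥0∞ := fun t => g t ^ p * ENNReal.ofReal (t ^ (a * p)) with hG
  have hGm : Measurable G := by rw [hG]; fun_prop
  set w : ℝ → ℝ≥0∞ := fun r => ENNReal.ofReal ((1 / s) ^ (p - 1) * r ^ (-1 - s)) with hw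
  have hwm : Measurable w := by rw [hw]; fun_prop
  have H2 : ∫⁻ r in Ioi (0:ℝ), (∫⁻ t in Ioc 0 r, g t) ^ p *
      ENNReal.ofReal (1 / r ^ (1 + s * p)) ≤
      ∫⁻ r in Ioi (0:ℝ), ∫⁻ t in Ioi (0:ℝ), w r * (Iic r).indicator G t := by
    refine setLIntegral_mono' measurableSet_Ioi fun r hr => ?_
    have hr0 : (0:ℝ) < r := hr
    rw [lintegral_const_mul' _ _ ENNReal.ofReal_ne_top, setLIntegral_indicator measurableSet_Iic,
      inter_comm, Ioi_inter_Iic]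
    calc _ ≤ _ := mul_le_mul_left (H r hr) _
      _ = _ := by
        rw [mul_right_comm, ← ENNReal.ofReal_mul (by positivity)]
        congr 2
        rw [Real.div_rpow (by positivity) hs.le, Real.div_rpow (by positivity) hs.le,
          Real.one_rpow, ← Real.rpow_mul hr0.le, one_div, ← Real.rpow_neg hr0.le,
          div_mul_eq_mul_div, ← Real.rpow_add hr0, div_mul_eq_mul_div, one_mul]
        congr 2; ring
  refine H2.trans ?_
  rw [lintegral_lintegral_swap, ← lintegral_const_mul' _ _ ENNReal.ofReal_ne_top]
  · refine setLIntegral_mono' measurableSet_Ioi fun t ht => ?_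
    have ht0 : (0:ℝ) < t := ht
    have e1 : ∀ r, w r * (Iic r).indicator G t = (Ici t).indicator w r * G t := by
      intro r
      by_cases h : t ≤ r <;> simp [indicator, h]
    simp_rw [e1]
    rw [lintegral_mul_const _ (hwm.indicator measurableSet_Ici),
      setLIntegral_indicator measurableSet_Ici,
      inter_eq_left.2 (Ici_subset_Ioi.2 ht0), setLIntegral_congr Ioi_ae_eq_Ici.symm]
    have e2 : ∫⁻ r in Ioi t, w r = ENNReal.ofReal ((1 / s) ^ (p - 1) * (t ^ (-s) / s)) := by
      rw [hw, ← ofReal_integral_eq_lintegral_ofReal]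
      · rw [integral_const_mul, integral_Ioi_rpow_of_lt (by linarith) ht0]
        congr 2
        rw [show -1 - s + 1 = -s by ring, neg_div_neg_eq]
      · exact (integrableOn_Ioi_rpow_of_lt (by linarith) ht0).const_mul _
      · filter_upwards [ae_restrict_mem measurableSet_Ioi] with r hr
        have hr0 : 0 < r := ht0.trans hr
        positivity
    rw [e2, hG]
    simp only
    rw [mul_left_comm, mul_left_comm (ENNReal.ofReal (1 / s ^ p)),
      ← ENNReal.ofReal_mul (by positivity), ← ENNReal.ofReal_mul (by positivity)]
    apply le_of_eq
    congr 2
    rw [Real.div_rpow zero_le_one hs.le, Real.one_rpow, one_div (t ^ _), ← Real.rpow_neg ht0.le]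
    have e3 : s ^ p = s ^ (p - 1) * s := by
      rw [← Real.rpow_add_one hs.ne']; congr 1; ring
    have e4 : t ^ (-(s * p - p + 1)) = t ^ (-s) * t ^ (a * p) := by
      rw [← Real.rpow_add ht0]; congr 1
      have : a * p = (1 - s) * (p / q) := by rw [ha]; ring
      rw [this, hpq1]; ring
    rw [e3, e4]
    field_simp
  · apply Measurable.aemeasurable
    have : (Function.uncurry fun r t => w r * (Iic r).indicator G t) =
        fun z : ℝ × ℝ => w z.1 * ({z : ℝ × ℝ | z.2 ≤ z.1}.indicator (fun z => G z.2) z) := by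
      ext ⟨r, t⟩; simp [indicator]
    rw [this]
    refine (hwm.comp measurable_fst).mul ((hGm.comp measurable_snd).indicator ?_)
    exact measurableSet_le measurable_snd measurable_fst

lemma polar (d : ℕ) (hd : 0 < d) {F : ℝ → ℝ≥0∞} (hF : Measurable F) :
    ∫⁻ y : Ed d, F ‖y‖ = (volume : Measure (Ed d)).toSphere univ *
      ∫⁻ r in Ioi (0:ℝ), ENNReal.ofReal (r ^ (d - 1)) * F r := by
  have : Nonempty (Fin d) := ⟨⟨0, hd⟩⟩
  have h1 : ∫⁻ y : Ed d, F ‖y‖ = ∫⁻ x : ({(0)}ᶜ : Set (Ed d)), F (‖x.1‖) ∂(volume.comap Subtype.val) := by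
    rw [lintegral_subtype_comap (measurableSet_singleton _).compl fun x ↦ F (‖x‖),
        restrict_compl_singleton]
  have h2 := ((volume : Measure (Ed d)).measurePreserving_homeomorphUnitSphereProd).lintegral_comp
    (f := fun z => F z.2.1) (by fun_prop)
  simp only [homeomorphUnitSphereProd_apply_snd_coe] at h2
  rw [h1, h2, lintegral_prod _ (by fun_prop)]
  simp only [lintegral_const]
  rw [mul_comm, Measure.volumeIoiPow, lintegral_withDensity_eq_lintegral_mul _ (by fun_prop)
    (by fun_prop)]
  simp only [Pi.mul_apply, finrank_euclideanSpace_fin]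
  rw [lintegral_subtype_comap measurableSet_Ioi fun r : ℝ => ENNReal.ofReal (r ^ (d - 1)) * F r]

lemma ftc_le (d : ℕ) {p : ℝ} (hp : 1 < p) {f : Ed d → ℝ} (hfm : Measurable f)
    (hf : MemLp f (ENNReal.ofReal p) volume) (x : Ed d) {e r : ℝ} (he : 0 < e) (her : e ≤ r) :
    ‖poissonIntS d f x e - poissonIntS d f x r‖ₑ ≤
      ∫⁻ t in Ioc 0 r, ‖∫ y, KD d t y * f (x - y)‖ₑ := by
  have hGm : Measurable (fun t => ∫ y, KD d t y * f (x - y)) :=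
    Measurable.of_uncurry_left (f := fun x t => ∫ y, KD d t y * f (x - y)) (meas_ud d hfm)
  by_cases h : ∫⁻ t in Ioc 0 r, ‖∫ y, KD d t y * f (x - y)‖ₑ = ∞
  · rw [h]; exact le_top
  have hsub : Ioc e r ⊆ Ioc 0 r := Ioc_subset_Ioc_left he.le
  have hle := lintegral_mono_set (μ := volume) (f := fun t => ‖∫ y, KD d t y * f (x - y)‖ₑ) hsub
  have hint : IntervalIntegrable (fun t => ∫ y, KD d t y * f (x - y)) volume e r := by
    rw [intervalIntegrable_iff_integrableOn_Ioc_of_le her]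
    exact ⟨hGm.aestronglyMeasurable, lt_of_le_of_lt hle (lt_top_iff_ne_top.2 h)⟩
  have h1 := intervalIntegral.integral_eq_sub_of_hasDerivAt
    (f := fun τ => poissonIntS d f x τ) (f' := fun t => ∫ y, KD d t y * f (x - y))
    (a := e) (b := r) (fun t ht => hasDerivAt_u d hp hfm hf
      (lt_of_lt_of_le he (by rw [uIcc_of_le her] at ht; exact ht.1)) x) hint
  rw [← enorm_neg, neg_sub, ← h1, intervalIntegral.integral_of_le her]
  exact (enorm_integral_le_lintegral_enorm _).trans hle

lemma ae_le (d : ℕ) {p : ℝ} (hp : 1 < p) {f : Ed d → ℝ} (hfm : Measurable f)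
    (hf : MemLp f (ENNReal.ofReal p) volume) :
    ∀ᵐ x : Ed d, ∀ r : ℝ, 0 < r → ‖f x - poissonIntS d f x r‖ₑ ≤
      ∫⁻ t in Ioc 0 r, ‖∫ y, KD d t y * f (x - y)‖ₑ := by
  have h1 : TendstoInMeasure volume (fun t x => poissonIntS d f x t) (𝓝[>] (0:ℝ)) f := by
    refine tendstoInMeasure_of_tendsto_eLpNorm (p := ENNReal.ofReal p) ?_ ?_
      hfm.aestronglyMeasurable (Lp_tendsto d hp hfm hf)
    · simp; linarith
    · intro t
      exact ((meas_u d hfm).comp (measurable_prodMk_right (y := t))).aestronglyMeasurable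
  obtain ⟨ns, hns, hlim⟩ := h1.exists_seq_tendsto_ae'
  filter_upwards [hlim] with x hx r hr
  have h2 : Tendsto (fun n => ‖poissonIntS d f x (ns n) - poissonIntS d f x r‖ₑ) atTop
      (𝓝 ‖f x - poissonIntS d f x r‖ₑ) := (hx.sub_const _).enorm
  refine le_of_tendsto h2 ?_
  have h3 : ∀ᶠ n in atTop, ns n ∈ Ioc 0 r := hns.eventually (Ioc_mem_nhdsGT hr)
  filter_upwards [h3] with n hn
  exact ftc_le d hp hfm hf x hn.1 hn.2

lemma main_meas (d : ℕ) {p : ℝ} (hp : 1 < p) {s : ℝ} (hs : 0 < s) {f : Ed d → ℝ}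
    (hfm : Measurable f) (hf : MemLp f (ENNReal.ofReal p) volume) :
    (∫⁻ y : Ed d,
      (eLpNorm (fun x => f x - poissonIntS d f x ‖y‖) (ENNReal.ofReal p) volume) ^ p *
        ENNReal.ofReal (1 / ‖y‖ ^ ((d : ℝ) + s * p))) ≤
      (volume : Measure (Ed d)).toSphere univ * (ENNReal.ofReal (1 / s ^ p) *
        ∫⁻ t in Set.Ioi (0 : ℝ),
          (eLpNorm (fun x => deriv (fun τ => poissonIntS d f x τ) t)
              (ENNReal.ofReal p) volume) ^ p *
            ENNReal.ofReal (1 / t ^ (s * p - p + 1))) := by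
  have hp0 : 0 < p := by linarith
  rcases Nat.eq_zero_or_pos d with rfl | hd
  · have : ∀ y : Ed 0, ‖y‖ = 0 := fun y => by rw [Subsingleton.elim y 0, norm_zero]
    have h0 : (0:ℝ) ^ (s * p) = 0 := Real.zero_rpow (by positivity)
    simp [this, h0]
  set G : Ed d → ℝ → ℝ := fun x t => ∫ y, KD d t y * f (x - y) with hG
  have hGm : Measurable (fun q : Ed d × ℝ => G q.1 q.2) := meas_ud d hfm
  have hum : Measurable (fun q : Ed d × ℝ => f q.1 - poissonIntS d f q.1 q.2) :=
    (hfm.comp measurable_fst).sub (meas_u d hfm)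
  -- right-hand side
  have hR : ∫⁻ t in Set.Ioi (0 : ℝ),
          (eLpNorm (fun x => deriv (fun τ => poissonIntS d f x τ) t)
              (ENNReal.ofReal p) volume) ^ p * ENNReal.ofReal (1 / t ^ (s * p - p + 1)) =
      ∫⁻ x, ∫⁻ t in Ioi (0:ℝ), ‖G x t‖ₑ ^ p * ENNReal.ofReal (1 / t ^ (s * p - p + 1)) := by
    rw [lintegral_lintegral_swap]
    · refine setLIntegral_congr_fun measurableSet_Ioi fun t ht => ?_
      have ht0 : (0:ℝ) < t := ht
      rw [eLpNorm_pow hp, ← lintegral_mul_const' _ _ ENNReal.ofReal_ne_top]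
      refine lintegral_congr fun x => ?_
      rw [(hasDerivAt_u d hp hfm hf ht0 x).deriv]
    · apply Measurable.aemeasurable
      have m2 : Measurable (fun q : Ed d × ℝ => ENNReal.ofReal (1 / q.2 ^ (s * p - p + 1))) := by
        fun_prop
      exact (hGm.enorm.pow_const p).mul m2
  -- left-hand side
  set F : ℝ → ℝ≥0∞ := fun r => (∫⁻ x, ‖f x - poissonIntS d f x r‖ₑ ^ p) *
    ENNReal.ofReal (1 / r ^ ((d : ℝ) + s * p)) with hF
  have hFm : Measurable F := by
    have m1 : Measurable (fun r => ∫⁻ x, ‖f x - poissonIntS d f x r‖ₑ ^ p) :=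
      (hum.enorm.pow_const p).lintegral_prod_left'
    have m2 : Measurable (fun r : ℝ => ENNReal.ofReal (1 / r ^ ((d : ℝ) + s * p))) := by fun_prop
    exact m1.mul m2
  have hL : (∫⁻ y : Ed d,
      (eLpNorm (fun x => f x - poissonIntS d f x ‖y‖) (ENNReal.ofReal p) volume) ^ p *
        ENNReal.ofReal (1 / ‖y‖ ^ ((d : ℝ) + s * p))) = ∫⁻ y : Ed d, F ‖y‖ := by
    refine lintegral_congr fun y => ?_
    rw [eLpNorm_pow hp]
  rw [hL, polar d hd hFm, hR]
  refine mul_le_mul_right ?_ _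
  have hL2 : ∫⁻ r in Ioi (0:ℝ), ENNReal.ofReal (r ^ (d - 1)) * F r =
      ∫⁻ x, ∫⁻ r in Ioi (0:ℝ), ‖f x - poissonIntS d f x r‖ₑ ^ p *
        ENNReal.ofReal (1 / r ^ (1 + s * p)) := by
    rw [lintegral_lintegral_swap]
    · refine setLIntegral_congr_fun measurableSet_Ioi fun r hr => ?_
      have hr0 : (0:ℝ) < r := hr
      rw [hF, lintegral_mul_const' _ _ ENNReal.ofReal_ne_top]
      simp only
      rw [mul_left_comm, ← ENNReal.ofReal_mul (by positivity)]
      congr 2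
      have e : r ^ ((d:ℝ) + s * p) = r ^ (d - 1) * r ^ (1 + s * p) := by
        rw [← Real.rpow_natCast, ← Real.rpow_add hr0]
        congr 1
        rw [Nat.cast_sub hd]; push_cast; ring
      rw [e]
      field_simp
    · apply Measurable.aemeasurable
      have m2 : Measurable (fun q : Ed d × ℝ => ENNReal.ofReal (1 / q.2 ^ (1 + s * p))) := by
        fun_prop
      exact (hum.enorm.pow_const p).mul m2
  rw [hL2, ← lintegral_const_mul' _ _ ENNReal.ofReal_ne_top]
  refine lintegral_mono_ae ?_
  filter_upwards [ae_le d hp hfm hf] with x hx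
  refine le_trans ?_ (hardy (g := fun t => ‖G x t‖ₑ) hp hs
    (hGm.comp (measurable_prodMk_left (x := x))).enorm)
  refine setLIntegral_mono' measurableSet_Ioi fun r hr => ?_
  gcongr
  exact hx r hr

theorem poisson_integral_boundary_estimate (d : ℕ) (p : ℝ) (hp : 1 < p) :
    ∃ C : ℝ, 0 < C ∧
      ∀ (s : ℝ), s ∈ Set.Ioo (0 : ℝ) 1 →
        ∀ f : Ed d → ℝ, MemLp f (ENNReal.ofReal p) volume →
          (∫⁻ y : Ed d,
              (eLpNorm (fun x => f x - poissonIntS d f x ‖y‖) (ENNReal.ofReal p) volume) ^ p *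
                ENNReal.ofReal (1 / ‖y‖ ^ ((d : ℝ) + s * p))) ≤
            ENNReal.ofReal (C / s ^ p) *
              ∫⁻ t in Set.Ioi (0 : ℝ),
                (eLpNorm (fun x => deriv (fun τ => poissonIntS d f x τ) t)
                    (ENNReal.ofReal p) volume) ^ p *
                  ENNReal.ofReal (1 / t ^ (s * p - p + 1)) := by
  set S := (volume : Measure (Ed d)).toSphere univ with hS
  have hSt : S ≠ ∞ := measure_ne_top _ _
  refine ⟨S.toReal + 1, by positivity, fun s hs f hf => ?_⟩
  have hs0 : 0 < s := hs.1
  set g := hf.1.mk f with hg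
  have hgm : Measurable g := hf.1.stronglyMeasurable_mk.measurable
  have hfg : f =ᵐ[volume] g := hf.1.ae_eq_mk
  have hgL : MemLp g (ENNReal.ofReal p) volume := hf.ae_eq hfg
  have hu : ∀ x t, poissonIntS d f x t = poissonIntS d g x t := by
    intro x t
    refine integral_congr_ae ?_
    have h1 : ∀ᵐ y, f (x - y) = g (x - y) :=
      (Measure.measurePreserving_sub_left volume x).quasiMeasurePreserving.ae hfg
    filter_upwards [h1] with y hy
    rw [hy]
  have hN : ∀ t, eLpNorm (fun x => f x - poissonIntS d g x t) (ENNReal.ofReal p) volume =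
      eLpNorm (fun x => g x - poissonIntS d g x t) (ENNReal.ofReal p) volume := by
    intro t
    refine eLpNorm_congr_ae ?_
    filter_upwards [hfg] with x hx
    rw [hx]
  simp_rw [hu, hN]
  refine (main_meas d hp hs0 hgm hgL).trans ?_
  rw [← mul_assoc]
  gcongr
  rw [← hS, ← ENNReal.ofReal_toReal hSt, ← ENNReal.ofReal_mul ENNReal.toReal_nonneg,
    ENNReal.toReal_ofReal ENNReal.toReal_nonneg]
  apply ENNReal.ofReal_le_ofReal
  rw [mul_one_div]
  gcongr
  linarith
end
end
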